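/- arXiv:1602.00429 — 3 statements merged into one kernel-verified Lean document; each statement's English description precedes it below -/
import Mathlib

section
/- Let Q be a regular local ring, f₁,…,f_c a Q-regular sequence, and R = Q/(f₁,…,f_c) (a local complete intersection). Let M and N be finitely generated R-modules. If Tor_i^R(M,N) = 0 for all sufficiently large i, then Tor_i^R(M,N) = 0 for all i > dim R. -/
/-!
STATEMENT 8: Over a local complete intersection `R = Q ⧸ (f₁, …, f_c)` (an AB ring), if `M`, `N`
are finitely generated `R`-modules with `Tor_i^R(M, N) = 0` for all sufficiently large `i`, then
`Tor_i^R(M, N) = 0` for all `i > dim R`.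
-/

open CategoryTheory CategoryTheory.Limits

universe u

/-- A Noetherian local ring is regular if its maximal ideal can be generated by
(Krull dimension of the ring) many elements. -/
def IsRegularLocal (Q : Type u) [CommRing Q] [IsLocalRing Q] : Prop :=
  IsNoetherianRing Q ∧ ∃ s : Finset Q, Ideal.span (s : Set Q) = IsLocalRing.maximalIdeal Q ∧
    (s.card : WithBot ℕ∞) = ringKrullDim Q

section ExtVanishing

variable {R : Type u} [CommRing R]

/-- The vanishing of the single group `Ext_R^i(N, X)`. -/
def ExtVanishes (R : Type u) [CommRing R] (X N : Type u) [AddCommGroup X] [Module R X]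
    [AddCommGroup N] [Module R N] (i : ℕ) : Prop :=
  Subsingleton (Abelian.Ext.{u} (ModuleCat.of R N) (ModuleCat.of R X) i)

variable {X A B C : Type u} [AddCommGroup X] [Module R X] [AddCommGroup A] [Module R A]
  [AddCommGroup B] [Module R B] [AddCommGroup C] [Module R C]
  {f : A →ₗ[R] B} {g : B →ₗ[R] C}

lemma LinearMap.shortExact_of_exact (hf : Function.Injective f) (hfg : Function.Exact f g)
    (hg : Function.Surjective g) :
    (ShortComplex.mk (ModuleCat.ofHom f) (ModuleCat.ofHom g)
      (by ext x; exact hfg.apply_apply_eq_zero x)).ShortExact where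
  exact := ModuleCat.shortComplex_exact _ hfg
  mono_f := (ModuleCat.mono_iff_injective _).2 hf
  epi_g := (ModuleCat.epi_iff_surjective _).2 hg

lemma ExtVanishes.middle (hf : Function.Injective f) (hfg : Function.Exact f g)
    (hg : Function.Surjective g) {i : ℕ} (hA : ExtVanishes R X A i) (hC : ExtVanishes R X C i) :
    ExtVanishes R X B i := by
  refine subsingleton_of_forall_eq 0 fun e ↦ ?_
  obtain ⟨e', rfl⟩ := Abelian.Ext.contravariant_sequence_exact₂
    (LinearMap.shortExact_of_exact hf hfg hg) _ e (hA.elim _ _)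
  rw [hC.elim e' 0, Abelian.Ext.comp_zero]

lemma ExtVanishes.left (hf : Function.Injective f) (hfg : Function.Exact f g)
    (hg : Function.Surjective g) {i : ℕ} (hB : ExtVanishes R X B i)
    (hC : ExtVanishes R X C (i + 1)) : ExtVanishes R X A i := by
  refine subsingleton_of_forall_eq 0 fun e ↦ ?_
  obtain ⟨e', rfl⟩ := Abelian.Ext.contravariant_sequence_exact₁
    (LinearMap.shortExact_of_exact hf hfg hg) _ e (add_comm 1 i) (hC.elim _ _)
  rw [hB.elim e' 0, Abelian.Ext.comp_zero]

lemma ExtVanishes.right (hf : Function.Injective f) (hfg : Function.Exact f g)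
    (hg : Function.Surjective g) {i : ℕ} (hB : ExtVanishes R X B (i + 1))
    (hA : ExtVanishes R X A i) : ExtVanishes R X C (i + 1) := by
  refine subsingleton_of_forall_eq 0 fun e ↦ ?_
  obtain ⟨e', rfl⟩ := Abelian.Ext.contravariant_sequence_exact₃
    (LinearMap.shortExact_of_exact hf hfg hg) _ e (hB.elim _ _) (add_comm 1 i)
  rw [hA.elim e' 0, Abelian.Ext.comp_zero]

lemma ExtVanishes.of_projective [Module.Projective R B] (i : ℕ) : ExtVanishes R X B (i + 1) :=
  HasProjectiveDimensionLT.subsingleton (ModuleCat.of R B) 1 (i + 1) (by omega) _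

lemma ExtVanishes.shift_iff [Module.Projective R B] (hf : Function.Injective f)
    (hfg : Function.Exact f g) (hg : Function.Surjective g) (i : ℕ) :
    ExtVanishes R X C (i + 2) ↔ ExtVanishes R X A (i + 1) :=
  ⟨fun h ↦ .left hf hfg hg (.of_projective i) h, fun h ↦ .right hf hfg hg (.of_projective _) h⟩

lemma ExtVanishes.one_iff [Module.Projective R B] (hf : Function.Injective f)
    (hfg : Function.Exact f g) (hg : Function.Surjective g) :
    ExtVanishes R X C 1 ↔ ∀ φ : A →ₗ[R] X, ∃ ψ : B →ₗ[R] X, ψ ∘ₗ f = φ := by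
  have hS := LinearMap.shortExact_of_exact hf hfg hg
  constructor
  · intro h φ
    obtain ⟨e, he⟩ := Abelian.Ext.contravariant_sequence_exact₁ hS (ModuleCat.of R X)
      (Abelian.Ext.mk₀ (ModuleCat.ofHom φ)) (add_comm 1 0) (h.elim _ _)
    obtain ⟨ψ, rfl⟩ := Abelian.Ext.homEquiv₀.symm.surjective e
    refine ⟨ψ.hom, ?_⟩
    rw [Abelian.Ext.homEquiv₀_symm_apply, Abelian.Ext.mk₀_comp_mk₀] at he
    exact congrArg ModuleCat.Hom.hom (Abelian.Ext.homEquiv₀.symm.injective he)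
  · intro h
    refine subsingleton_of_forall_eq 0 fun e ↦ ?_
    obtain ⟨e', rfl⟩ := Abelian.Ext.contravariant_sequence_exact₃ hS _ e
      ((ExtVanishes.of_projective (R := R) (X := X) (B := B) 0).elim _ _) (add_comm 1 0)
    obtain ⟨φ, rfl⟩ := Abelian.Ext.homEquiv₀.symm.surjective e'
    obtain ⟨ψ, hψ⟩ := h φ.hom
    have hφ : φ = ModuleCat.ofHom f ≫ ModuleCat.ofHom ψ := by
      ext x
      exact (LinearMap.congr_fun hψ x).symm
    have := (Abelian.Ext.mk₀_comp_mk₀ (ModuleCat.ofHom f) (ModuleCat.ofHom ψ)).symm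
    rw [Abelian.Ext.homEquiv₀_symm_apply, hφ, this]
    exact hS.extClass_comp_assoc _

variable (g) in
lemma ExtVanishes.shift_ker_iff [Module.Projective R B] (hg : Function.Surjective g) (i : ℕ) :
    ExtVanishes R X C (i + 2) ↔ ExtVanishes R X (LinearMap.ker g) (i + 1) :=
  ExtVanishes.shift_iff (f := (LinearMap.ker g).subtype) (Submodule.injective_subtype _)
    (LinearMap.exact_subtype_ker_map g) hg i

variable (g) in
lemma ExtVanishes.one_ker_iff [Module.Projective R B] (hg : Function.Surjective g) :
    ExtVanishes R X C 1 ↔ ∀ φ : LinearMap.ker g →ₗ[R] X, ∃ ψ : B →ₗ[R] X,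
      ψ ∘ₗ (LinearMap.ker g).subtype = φ :=
  ExtVanishes.one_iff (f := (LinearMap.ker g).subtype) (Submodule.injective_subtype _)
    (LinearMap.exact_subtype_ker_map g) hg

end ExtVanishing

section TorExtDuality

open TensorProduct

variable {R : Type u} [CommRing R]

lemma CharacterModule.exact_iff_dual {A B C : Type u} [AddCommGroup A] [Module R A]
    [AddCommGroup B] [Module R B] [AddCommGroup C] [Module R C] (f : A →ₗ[R] B) (g : B →ₗ[R] C)
    (hgf : g ∘ₗ f = 0) :
    Function.Exact f g ↔ ∀ c : CharacterModule B, dual f c = 0 →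
      ∃ c' : CharacterModule C, dual g c' = c := by
  constructor
  · intro h c hc
    have hker : (LinearMap.ker g).toAddSubgroup ≤ AddMonoidHom.ker (G := B) c := by
      intro z hz
      obtain ⟨y, rfl⟩ := (h z).1 hz
      exact DFunLike.congr_fun hc y
    let c₁ : CharacterModule (B ⧸ LinearMap.ker g) := QuotientAddGroup.lift _ c hker
    obtain ⟨c', hc'⟩ := dual_surjective_of_injective ((LinearMap.ker g).liftQ g le_rfl)
      (LinearMap.ker_eq_bot.1 (Submodule.ker_liftQ_eq_bot' _ _ rfl)) c₁
    exact ⟨c', DFunLike.ext _ _ fun z ↦ DFunLike.congr_fun hc' (Submodule.Quotient.mk z)⟩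
  · intro h z
    refine ⟨fun hz ↦ ?_, ?_⟩
    · suffices (LinearMap.range f).mkQ z = 0 by simpa using this
      refine eq_zero_of_character_apply fun c ↦ ?_
      obtain ⟨c', hc'⟩ := h (dual (LinearMap.range f).mkQ c) <| by
        rw [← LinearMap.comp_apply, ← dual_comp, LinearMap.range_mkQ_comp, dual_zero,
          LinearMap.zero_apply]
      have := DFunLike.congr_fun hc' z
      simp only [dual_apply] at this
      exact this.symm.trans ((congrArg c' hz).trans (map_zero c'))
    · rintro ⟨y, rfl⟩
      exact LinearMap.congr_fun hgf y

/-- The tensor-hom adjunction for character modules. -/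
noncomputable def CharacterModule.homEquivLeft (M P : Type u) [AddCommGroup M] [Module R M]
    [AddCommGroup P] [Module R P] :
    (P →ₗ[R] CharacterModule M) ≃ₗ[R] CharacterModule (M ⊗[R] P) :=
  homEquiv.trans (CharacterModule.congr (TensorProduct.comm R P M))

lemma CharacterModule.dual_lTensor_homEquivLeft {M P P' : Type u} [AddCommGroup M] [Module R M]
    [AddCommGroup P] [Module R P] [AddCommGroup P'] [Module R P'] (f : P →ₗ[R] P')
    (φ : P' →ₗ[R] CharacterModule M) :
    dual (f.lTensor M) (homEquivLeft M P' φ) = homEquivLeft M P (φ ∘ₗ f) := by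
  refine DFunLike.ext _ _ fun z ↦ ?_
  induction z with
  | zero => rw [map_zero, map_zero]
  | tmul m p => rfl
  | add x y hx hy => rw [map_add, map_add, hx, hy]

/-- Exactness of a complex after tensoring with `M` is dual to exactness after applying
`Hom(-, M⋆)`, where `M⋆` is the character module. -/
lemma exact_lTensor_iff_character {P₀ P₁ P₂ : Type u} [AddCommGroup P₀] [Module R P₀]
    [AddCommGroup P₁] [Module R P₁] [AddCommGroup P₂] [Module R P₂] (f : P₂ →ₗ[R] P₁)
    (g : P₁ →ₗ[R] P₀) (hgf : g ∘ₗ f = 0) (M : Type u) [AddCommGroup M] [Module R M] :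
    Function.Exact (f.lTensor M) (g.lTensor M) ↔
      ∀ φ : P₁ →ₗ[R] CharacterModule M, φ ∘ₗ f = 0 →
        ∃ ψ : P₀ →ₗ[R] CharacterModule M, ψ ∘ₗ g = φ := by
  rw [CharacterModule.exact_iff_dual _ _
    (by rw [← LinearMap.lTensor_comp, hgf, LinearMap.lTensor_zero]),
    (CharacterModule.homEquivLeft M P₁).surjective.forall]
  refine forall_congr' fun φ ↦ ?_
  rw [CharacterModule.dual_lTensor_homEquivLeft, LinearEquiv.map_eq_zero_iff,
    (CharacterModule.homEquivLeft M P₀).surjective.exists]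
  simp only [CharacterModule.dual_lTensor_homEquivLeft, EmbeddingLike.apply_eq_iff_eq]

open MonoidalCategory in
/-- `Tor_i(M, N)` vanishes if and only if `Ext^i(N, M⋆)` does. -/
lemma isZero_Tor_succ_iff_extVanishes (M N : ModuleCat.{u} R) (i : ℕ) :
    IsZero (((Tor (ModuleCat.{u} R) (i + 1)).obj M).obj N) ↔
      ExtVanishes R (CharacterModule M) N (i + 1) := by
  let P := projectiveResolution N
  have hTor : IsZero (((Tor (ModuleCat.{u} R) (i + 1)).obj M).obj N) ↔
      Function.Exact ((P.complex.d (i + 2) (i + 1)).hom.lTensor M)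
        ((P.complex.d (i + 1) i).hom.lTensor M) := by
    refine (P.isoLeftDerivedObj ((tensoringLeft (ModuleCat.{u} R)).obj M)
      (i + 1)).isZero_iff.trans ?_
    refine (HomologicalComplex.exactAt_iff_isZero_homology _ _).symm.trans ?_
    rw [HomologicalComplex.exactAt_iff' _ (i + 2) (i + 1) i (by simp) (by simp),
      ShortComplex.moduleCat_exact_iff_range_eq_ker, eq_comm, ← LinearMap.exact_iff]
    rfl
  rw [hTor, exact_lTensor_iff_character _ _
    (by rw [← ModuleCat.hom_comp, P.complex.d_comp_d, ModuleCat.hom_zero])]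
  constructor
  · intro h
    refine subsingleton_of_forall_eq 0 fun e ↦ ?_
    obtain ⟨φ, hφ, rfl⟩ := P.extMk_surjective e (i + 2) rfl
    obtain ⟨ψ, hψ⟩ := h φ.hom (congrArg ModuleCat.Hom.hom hφ)
    exact (P.extMk_eq_zero_iff φ (i + 2) rfl hφ i rfl).2
      ⟨ModuleCat.ofHom ψ, ModuleCat.hom_ext hψ⟩
  · intro h φ hφ
    obtain ⟨ψ, hψ⟩ := (P.extMk_eq_zero_iff (Y := ModuleCat.of R (CharacterModule M))
      (ModuleCat.ofHom φ) (i + 2) rfl (ModuleCat.hom_ext hφ) i rfl).1 (h.elim _ _)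
    exact ⟨ψ.hom, congrArg ModuleCat.Hom.hom hψ⟩

end TorExtDuality

section ChangeOfRings

open TensorProduct

variable {A B : Type u} [CommRing A] [CommRing B] [Algebra A B] {x : A}

/-- The linear map `p : K → K'` exhibits `K'` as the quotient `K / xK`, provided `x` acts as
zero on `K'`. -/
structure IsReduction (x : A) {K K' : Type u} [AddCommGroup K] [Module A K] [AddCommGroup K']
    [Module A K'] (p : K →ₗ[A] K') : Prop where
  surjective : Function.Surjective p
  exists_smul_eq : ∀ k, p k = 0 → ∃ k', x • k' = k

lemma smul_eq_zero_of_algebraMap_eq_zero (hx : algebraMap A B x = 0) {N : Type u} [AddCommGroup N]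
    [Module A N] [Module B N] [IsScalarTower A B N] (n : N) : x • n = 0 := by
  rw [← algebraMap_smul B, hx, zero_smul]

lemma LinearMap.exists_factor_of_surjective (hs : Function.Surjective (algebraMap A B))
    {P N Y : Type u} [AddCommGroup P] [Module A P] [AddCommGroup N] [Module A N] [Module B N]
    [IsScalarTower A B N] [AddCommGroup Y] [Module A Y] [Module B Y] [IsScalarTower A B Y]
    (π : P →ₗ[A] N) (hπ : Function.Surjective π) (g : P →ₗ[A] Y) (hg : ∀ z, π z = 0 → g z = 0) :
    ∃ g' : N →ₗ[B] Y, ∀ z, g' (π z) = g z := by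
  refine ⟨((LinearMap.ker π).liftQ g hg ∘ₗ
    (π.quotKerEquivOfSurjective hπ).symm.toLinearMap).extendScalarsOfSurjective hs, fun z ↦ ?_⟩
  have : (π.quotKerEquivOfSurjective hπ).symm (π z) = Submodule.Quotient.mk z := by
    rw [LinearEquiv.symm_apply_eq]
    rfl
  simp only [LinearMap.extendScalarsOfSurjective_apply, LinearMap.comp_apply,
    LinearEquiv.coe_coe, this]
  rfl

variable {K K' P P' X : Type u} [AddCommGroup K] [Module A K]
  [AddCommGroup K'] [Module A K'] [Module B K'] [IsScalarTower A B K']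
  [AddCommGroup P] [Module A P]
  [AddCommGroup P'] [Module A P'] [Module B P'] [IsScalarTower A B P']
  [AddCommGroup X] [Module A X] [Module B X] [IsScalarTower A B X]
  {p : K →ₗ[A] K'} {q : P →ₗ[A] P'}

/-- A linear map to a `B`-module factors through a reduction modulo `x`. -/
lemma IsReduction.exists_factor (hs : Function.Surjective (algebraMap A B))
    (hx : algebraMap A B x = 0) (hq : IsReduction x q) (g : P →ₗ[A] X) :
    ∃ g' : P' →ₗ[B] X, ∀ z, g' (q z) = g z := by
  refine LinearMap.exists_factor_of_surjective hs q hq.surjective g fun z hz ↦ ?_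
  obtain ⟨w, rfl⟩ := hq.exists_smul_eq z hz
  rw [map_smul, smul_eq_zero_of_algebraMap_eq_zero hx]

/-- If `x` is regular on `K`, a presentation `π : P → K` stays exact modulo `x`. -/
lemma IsReduction.exists_ker (hs : Function.Surjective (algebraMap A B))
    (hx : algebraMap A B x = 0) (hp : IsReduction x p) (hq : IsReduction x q)
    (hK : IsSMulRegular K x) (π : P →ₗ[A] K) (hπ : Function.Surjective π) :
    ∃ (π' : P' →ₗ[B] K') (r : LinearMap.ker π →ₗ[A] LinearMap.ker π'),
      Function.Surjective π' ∧ (∀ z, (r z : P') = q z) ∧ IsReduction x r := by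
  obtain ⟨π', hπ'⟩ := hq.exists_factor hs hx (p ∘ₗ π)
  refine ⟨π', LinearMap.codRestrict ((LinearMap.ker π').restrictScalars A)
    (q ∘ₗ (LinearMap.ker π).subtype) fun z ↦ ?_, ?_, fun z ↦ rfl, ?_, ?_⟩
  · have := hπ' z
    simpa using this
  · intro y
    obtain ⟨k, rfl⟩ := hp.surjective y
    obtain ⟨z, rfl⟩ := hπ k
    exact ⟨q z, hπ' z⟩
  · rintro ⟨y, hy⟩
    obtain ⟨z, rfl⟩ := hq.surjective y
    obtain ⟨k, hk⟩ := hp.exists_smul_eq (π z) ((hπ' z).symm.trans hy)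
    obtain ⟨w, rfl⟩ := hπ k
    refine ⟨⟨z - x • w, by simp [hk]⟩, Subtype.ext ?_⟩
    change q (z - x • w) = q z
    rw [map_sub, map_smul, smul_eq_zero_of_algebraMap_eq_zero hx, sub_zero]
  · rintro ⟨z, hz⟩ h
    obtain ⟨w, rfl⟩ := hq.exists_smul_eq z (congrArg Subtype.val h)
    have hw : x • π w = x • 0 := by simpa using hz
    exact ⟨⟨w, hK hw⟩, rfl⟩

variable (K) in
lemma isReduction_tensor (hs : Function.Surjective (algebraMap A B))
    (hker : RingHom.ker (algebraMap A B) = Ideal.span {x}) :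
    IsReduction x (TensorProduct.mk A B K 1) where
  surjective := TensorProduct.mk_surjective A K B hs
  exists_smul_eq k hk := by
    have hex : Function.Exact (LinearMap.lsmul A A x) (Algebra.linearMap A B) := by
      intro a
      change a ∈ RingHom.ker (algebraMap A B) ↔ _
      rw [hker, Ideal.mem_span_singleton]
      exact ⟨fun ⟨b, hb⟩ ↦ ⟨b, hb.symm⟩, fun ⟨b, hb⟩ ↦ ⟨b, hb.symm⟩⟩
    have hsmul : (LinearMap.lsmul A A x).rTensor K = x • LinearMap.id := by
      ext
      simp [smul_tmul']
    obtain ⟨y, hy⟩ := (rTensor_exact K hex hs (1 ⊗ₜ[A] k)).1 (by simpa using hk)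
    refine ⟨TensorProduct.lid A K y, ?_⟩
    rw [hsmul, LinearMap.smul_apply, LinearMap.id_apply] at hy
    rw [← map_smul, hy, TensorProduct.lid_tmul, one_smul]

lemma algebraMap_eq_zero_of_ker_eq_span (hker : RingHom.ker (algebraMap A B) = Ideal.span {x}) :
    algebraMap A B x = 0 := by
  rw [← RingHom.mem_ker, hker]
  exact Ideal.mem_span_singleton_self x

variable (X) in
/-- If `x` is regular on `A` and on `K`, then `Ext_A(K, X)` and `Ext_{A/x}(K/xK, X)` vanish in the
same positive degrees for each `A/x`-module `X`. -/
lemma IsReduction.extVanishes_iff (hs : Function.Surjective (algebraMap A B))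
    (hker : RingHom.ker (algebraMap A B) = Ideal.span {x}) (hA : IsSMulRegular A x)
    (hp : IsReduction x p) (hK : IsSMulRegular K x) (n : ℕ) :
    ExtVanishes A X K (n + 1) ↔ ExtVanishes B X K' (n + 1) := by
  have hx := algebraMap_eq_zero_of_ker_eq_span hker
  induction n generalizing K K' with
  | zero =>
    let π := Finsupp.linearCombination A (id : K → K)
    have hπ : Function.Surjective π := Finsupp.linearCombination_id_surjective A K
    have hq := isReduction_tensor (K →₀ A) hs hker
    obtain ⟨π', r, hπ', hrq, hr⟩ := hp.exists_ker hs hx hq hK π hπ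
    rw [zero_add, ExtVanishes.one_ker_iff π hπ,
      ExtVanishes.one_ker_iff π' hπ']
    constructor
    · intro h φ
      obtain ⟨ψ, hψ⟩ := h (φ.restrictScalars A ∘ₗ r)
      obtain ⟨ψ', hψ'⟩ := hq.exists_factor hs hx ψ
      refine ⟨ψ', LinearMap.ext fun y ↦ ?_⟩
      obtain ⟨z, rfl⟩ := hr.surjective y
      have := LinearMap.congr_fun hψ z
      simpa [hrq] using (hψ' _).trans this
    · intro h φ
      obtain ⟨φ', hφ'⟩ := hr.exists_factor hs hx φ
      obtain ⟨ψ, hψ⟩ := h φ'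
      refine ⟨ψ.restrictScalars A ∘ₗ TensorProduct.mk A B (K →₀ A) 1, LinearMap.ext fun z ↦ ?_⟩
      have := LinearMap.congr_fun hψ (r z)
      simpa [hrq, hφ'] using this
  | succ n ih =>
    let π := Finsupp.linearCombination A (id : K → K)
    have hπ : Function.Surjective π := Finsupp.linearCombination_id_surjective A K
    obtain ⟨π', r, hπ', -, hr⟩ :=
      hp.exists_ker hs hx (isReduction_tensor (K →₀ A) hs hker) hK π hπ
    rw [ExtVanishes.shift_ker_iff π hπ,
      ExtVanishes.shift_ker_iff π' hπ']
    exact ih hr (hA.finsupp.submodule _ _)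

/-- The syzygy `ker π` of an `A/x`-module `N` over `A` and its syzygy `ker π'` over `A/x` are related
by a short exact sequence `0 → N → ker π / x ker π → ker π' → 0`. -/
lemma IsReduction.exists_exact_syzygies (hs : Function.Surjective (algebraMap A B))
    (hx : algebraMap A B x = 0) (hP : IsSMulRegular P x)
    {N : Type u} [AddCommGroup N] [Module A N] [Module B N] [IsScalarTower A B N]
    {π : P →ₗ[A] N} (hπ : Function.Surjective π) (hq : IsReduction x q)
    {p : LinearMap.ker π →ₗ[A] K'} (hp : IsReduction x p) :
    ∃ (π' : P' →ₗ[B] N) (i : N →ₗ[B] K') (j : K' →ₗ[B] LinearMap.ker π'),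
      Function.Surjective π' ∧
        Function.Injective i ∧ Function.Exact i j ∧ Function.Surjective j := by
  obtain ⟨π', hπ'⟩ := hq.exists_factor hs hx π
  let xK : P →ₗ[A] LinearMap.ker π :=
    LinearMap.codRestrict _ (LinearMap.lsmul A _ x) fun z ↦ by
      simp [smul_eq_zero_of_algebraMap_eq_zero hx]
  obtain ⟨i, hi⟩ := LinearMap.exists_factor_of_surjective hs π hπ (p ∘ₗ xK) fun z hz ↦ by
    have : xK z = x • ⟨z, hz⟩ := rfl
    rw [LinearMap.comp_apply, this, map_smul, smul_eq_zero_of_algebraMap_eq_zero hx]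
  let s : LinearMap.ker π →ₗ[A] LinearMap.ker π' :=
    LinearMap.codRestrict ((LinearMap.ker π').restrictScalars A)
      (q ∘ₗ (LinearMap.ker π).subtype) fun z ↦ by
        have := hπ' z
        simpa using this
  have hsq (z) : (s z : P') = q z := rfl
  obtain ⟨j, hj⟩ := hp.exists_factor hs hx s
  refine ⟨π', i, j, fun y ↦ ?_, ?_, fun y ↦ ⟨fun hy ↦ ?_, ?_⟩, ?_⟩
  · obtain ⟨z, rfl⟩ := hπ y
    exact ⟨q z, hπ' z⟩
  · refine (injective_iff_map_eq_zero i).2 fun y hy ↦ ?_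
    obtain ⟨z, rfl⟩ := hπ y
    obtain ⟨k, hk⟩ := hp.exists_smul_eq _ ((hi z).symm.trans hy)
    have : (k : P) = z := hP (congrArg Subtype.val hk)
    rw [← this]
    exact k.2
  · obtain ⟨k, rfl⟩ := hp.surjective y
    have hk : q k = 0 := by
      rw [hj] at hy
      rw [← hsq, hy]
      rfl
    obtain ⟨z, hz⟩ := hq.exists_smul_eq _ hk
    exact ⟨π z, (hi z).trans (congrArg p (Subtype.ext hz))⟩
  · rintro ⟨y, rfl⟩
    obtain ⟨z, rfl⟩ := hπ y
    rw [hi, LinearMap.comp_apply, hj]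
    refine Subtype.ext ?_
    change q (x • z) = 0
    rw [map_smul, smul_eq_zero_of_algebraMap_eq_zero hx]
  · rintro ⟨y, hy⟩
    obtain ⟨z, rfl⟩ := hq.surjective y
    exact ⟨p ⟨z, (hπ' z).symm.trans hy⟩, (hj _).trans rfl⟩

variable {N : Type u} [AddCommGroup N] [Module A N] [Module B N] [IsScalarTower A B N]

lemma ExtVanishes.succ_of_quotient (hs : Function.Surjective (algebraMap A B))
    (hker : RingHom.ker (algebraMap A B) = Ideal.span {x}) (hA : IsSMulRegular A x) {n : ℕ}
    (h₁ : ExtVanishes B X N (n + 1)) (h₂ : ExtVanishes B X N (n + 2)) :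
    ExtVanishes A X N (n + 2) := by
  have hπ := Finsupp.linearCombination_id_surjective A N
  have hp := isReduction_tensor (LinearMap.ker (Finsupp.linearCombination A (id : N → N))) hs hker
  obtain ⟨π', i, j, hπ', hi, hij, hj⟩ := IsReduction.exists_exact_syzygies hs
    (algebraMap_eq_zero_of_ker_eq_span hker) hA.finsupp hπ (isReduction_tensor (N →₀ A) hs hker) hp
  rw [ExtVanishes.shift_ker_iff _ hπ,
    hp.extVanishes_iff X hs hker hA (hA.finsupp.submodule _ _)]
  exact .middle hi hij hj h₁ ((ExtVanishes.shift_ker_iff π' hπ' n).1 h₂)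

lemma ExtVanishes.quotient_of_add_two (hs : Function.Surjective (algebraMap A B))
    (hker : RingHom.ker (algebraMap A B) = Ideal.span {x}) (hA : IsSMulRegular A x) {n : ℕ}
    (h₁ : ExtVanishes A X N (n + 2)) (h₂ : ExtVanishes B X N (n + 3)) :
    ExtVanishes B X N (n + 1) := by
  have hπ := Finsupp.linearCombination_id_surjective A N
  have hp := isReduction_tensor (LinearMap.ker (Finsupp.linearCombination A (id : N → N))) hs hker
  obtain ⟨π', i, j, hπ', hi, hij, hj⟩ := IsReduction.exists_exact_syzygies hs
    (algebraMap_eq_zero_of_ker_eq_span hker) hA.finsupp hπ (isReduction_tensor (N →₀ A) hs hker) hp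
  rw [ExtVanishes.shift_ker_iff _ hπ,
    hp.extVanishes_iff X hs hker hA (hA.finsupp.submodule _ _)] at h₁
  exact .left hi hij hj h₁ ((ExtVanishes.shift_ker_iff π' hπ' (n + 1)).1 h₂)

end ChangeOfRings

section AuslanderBound

/-- For finitely generated `R`-modules, eventual vanishing of `Ext` forces its vanishing beyond
degree `d`. -/
def HasExtBound (R : Type u) [CommRing R] (d : ℕ) : Prop :=
  ∀ (N X : Type u) [AddCommGroup N] [Module R N] [AddCommGroup X] [Module R X]
    [Module.Finite R N], (∃ n, ∀ i, n ≤ i → ExtVanishes R X N i) →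
      ∀ i, d < i → ExtVanishes R X N i

variable {A B : Type u} [CommRing A] [CommRing B]

lemma HasExtBound.of_ker_eq_span [Algebra A B] {x : A} {d : ℕ}
    (hs : Function.Surjective (algebraMap A B))
    (hker : RingHom.ker (algebraMap A B) = Ideal.span {x}) (hA : IsSMulRegular A x)
    (h : HasExtBound A (d + 1)) : HasExtBound B d := by
  intro N X _ _ _ _ _ ⟨n, hn⟩
  let _ := Module.compHom N (algebraMap A B)
  let _ := Module.compHom X (algebraMap A B)
  have : IsScalarTower A B N := .of_algebraMap_smul fun _ _ ↦ rfl
  have : IsScalarTower A B X := .of_algebraMap_smul fun _ _ ↦ rfl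
  have : Module.Finite A B := .of_surjective (Algebra.linearMap A B) hs
  have : Module.Finite A N := .trans B N
  have hAN : ∀ i, d + 1 < i → ExtVanishes A X N i := by
    refine h N X ⟨n + 2, fun i hi ↦ ?_⟩
    obtain ⟨i, rfl⟩ := Nat.exists_eq_add_of_le' ((Nat.le_add_left 2 n).trans hi)
    exact .succ_of_quotient hs hker hA (hn _ (by omega)) (hn _ (by omega))
  have key (k : ℕ) : ∀ j, n ≤ j + 1 + 2 * k → d < j + 1 → ExtVanishes B X N (j + 1) := by
    induction k with
    | zero => exact fun j hj _ ↦ hn _ hj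
    | succ k ih =>
      intro j hj hd
      exact .quotient_of_add_two hs hker hA (hAN _ (by omega))
        (ih (j + 2) (by omega) (by omega))
  intro i hi
  obtain ⟨j, rfl⟩ := Nat.exists_eq_add_of_lt (Nat.zero_lt_of_lt hi)
  rw [zero_add] at *
  exact key n j (by omega) hi

variable {Q : Type u} [CommRing Q]

lemma HasExtBound.quotient_ofList {d : ℕ} (h : HasExtBound (Q ⧸ Ideal.ofList ([] : List Q)) d)
    {f : List Q} (hf : RingTheory.Sequence.IsWeaklyRegular Q f) (hd : f.length ≤ d) :
    HasExtBound (Q ⧸ Ideal.ofList f) (d - f.length) := by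
  induction f using List.reverseRecOn with
  | nil => exact h
  | append_singleton l x ih =>
    rw [RingTheory.Sequence.isWeaklyRegular_append_iff'] at hf
    rw [List.length_append, List.length_singleton] at hd ⊢
    have hle : Ideal.ofList l ≤ Ideal.ofList (l ++ [x]) := by
      rw [Ideal.ofList_append]
      exact le_sup_left
    let _ := (Ideal.Quotient.factor hle).toAlgebra
    refine HasExtBound.of_ker_eq_span (A := Q ⧸ Ideal.ofList l)
      (x := Ideal.Quotient.mk _ x) (Ideal.Quotient.factor_surjective hle) ?_ ?_ ?_
    · change RingHom.ker (Ideal.Quotient.factor hle) = _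
      rw [Ideal.Quotient.factor_ker, Ideal.ofList_append, Ideal.map_sup, Ideal.map_quotient_self,
        bot_sup_eq, Ideal.ofList_singleton, Ideal.map_span, Set.image_singleton]
    · have hx := ((RingTheory.Sequence.isWeaklyRegular_cons_iff _ _ _).1 hf.2).1
      refine IsSMulRegular.of_right_eq_zero_of_smul fun a ha ↦ ?_
      obtain ⟨a, rfl⟩ := Ideal.Quotient.mk_surjective a
      rw [smul_eq_mul, ← map_mul, Ideal.Quotient.eq_zero_iff_mem] at ha
      rw [Ideal.Quotient.eq_zero_iff_mem]
      have hI : Ideal.ofList l • (⊤ : Submodule Q Q) = Ideal.ofList l := Ideal.mul_top _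
      rw [← hI] at ha ⊢
      exact (Submodule.Quotient.mk_eq_zero _).1
        (hx.right_eq_zero_of_smul ((Submodule.Quotient.mk_eq_zero _).2 ha))
    · have := ih hf.1 (by omega)
      convert this using 1
      omega

end AuslanderBound

section ProjectiveDimension

open scoped Pointwise

variable {R : Type u} [CommRing R]

lemma hasProjectiveDimensionLT_ker_iff {P N : Type u} [AddCommGroup P] [Module R P]
    [AddCommGroup N] [Module R N] [Module.Projective R P] {g : P →ₗ[R] N}
    (hg : Function.Surjective g) (n : ℕ) :
    HasProjectiveDimensionLT (ModuleCat.of R N) (n + 2) ↔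
      HasProjectiveDimensionLT (ModuleCat.of R (LinearMap.ker g)) (n + 1) :=
  (LinearMap.shortExact_of_exact (Submodule.injective_subtype _)
    (LinearMap.exact_subtype_ker_map g) hg).hasProjectiveDimensionLT_X₃_iff n
      (inferInstanceAs (Projective (ModuleCat.of R P)))

lemma isReduction_mkQ (x : R) (K : Type u) [AddCommGroup K] [Module R K] :
    IsReduction x (x • (⊤ : Submodule R K)).mkQ where
  surjective := Submodule.mkQ_surjective _
  exists_smul_eq k hk := by
    rw [Submodule.mkQ_apply, Submodule.Quotient.mk_eq_zero] at hk
    obtain ⟨k', -, h⟩ := hk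
    exact ⟨k', h⟩

variable [IsLocalRing R]

lemma IsLocalRing.quotient_span_singleton {x : R} (hx : x ∈ IsLocalRing.maximalIdeal R) :
    IsLocalRing (R ⧸ Ideal.span {x}) := by
  have : Nontrivial (R ⧸ Ideal.span {x}) := Ideal.Quotient.nontrivial_iff.2
    (((Ideal.span_singleton_le_iff_mem _).2 hx).trans_lt
      (lt_top_iff_ne_top.2 Ideal.IsPrime.ne_top')).ne
  exact .of_surjective' _ Ideal.Quotient.mk_surjective

variable [IsNoetherianRing R]

/-- The projective dimension does not increase when it is lifted along reduction modulo a regular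
element. -/
lemma IsReduction.hasProjectiveDimensionLT {x : R} (hx : x ∈ IsLocalRing.maximalIdeal R)
    (hR : IsSMulRegular R x) {K K' : Type u} [AddCommGroup K] [Module R K] [Module.Finite R K]
    [AddCommGroup K'] [Module R K'] [Module (R ⧸ Ideal.span {x}) K']
    [IsScalarTower R (R ⧸ Ideal.span {x}) K'] {p : K →ₗ[R] K'} (hp : IsReduction x p)
    (hK : IsSMulRegular K x) (n : ℕ)
    (h : HasProjectiveDimensionLT (ModuleCat.of (R ⧸ Ideal.span {x}) K') (n + 1)) :
    HasProjectiveDimensionLT (ModuleCat.of R K) (n + 1) := by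
  have hs : Function.Surjective (algebraMap R (R ⧸ Ideal.span {x})) :=
    Ideal.Quotient.mk_surjective
  have hx0 : algebraMap R (R ⧸ Ideal.span {x}) x = 0 :=
    Ideal.Quotient.eq_zero_iff_mem.2 (Ideal.mem_span_singleton_self x)
  induction n generalizing K K' with
  | zero =>
    have := IsLocalRing.quotient_span_singleton hx
    have : Projective (ModuleCat.of (R ⧸ Ideal.span {x}) K') := inferInstance
    have : Module.Projective (R ⧸ Ideal.span {x}) K' := (IsProjective.iff_projective _).2 this
    have : Module.Finite R K' := .of_surjective p hp.surjective
    have : Module.Finite (R ⧸ Ideal.span {x}) K' := .of_restrictScalars_finite R _ _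
    have : Module.Free (R ⧸ Ideal.span {x}) K' := Module.free_of_flat_of_isLocalRing
    obtain ⟨e, he⟩ := hp.exists_factor hs hx0 (x • (⊤ : Submodule R K)).mkQ
    have he' : Function.Bijective e := by
      constructor
      · refine (injective_iff_map_eq_zero e).2 fun y hy ↦ ?_
        obtain ⟨k, rfl⟩ := hp.surjective y
        rw [he] at hy
        obtain ⟨k', rfl⟩ := (isReduction_mkQ x K).exists_smul_eq k hy
        rw [map_smul, smul_eq_zero_of_algebraMap_eq_zero hx0]
      · intro y
        obtain ⟨k, rfl⟩ := Submodule.mkQ_surjective _ y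
        exact ⟨p k, he k⟩
    have : Module.Free (R ⧸ Ideal.span {x}) (QuotSMulTop x K) :=
      .of_equiv (LinearEquiv.ofBijective e he')
    have : Module.FinitePresentation R K := Module.finitePresentation_of_finite R K
    have : Module.Free R K := (Module.free_quotSMulTop_iff_free R K
      (IsLocalRing.maximalIdeal_le_jacobson _ hx) hK).1 inferInstance
    infer_instance
  | succ n ih =>
    obtain ⟨m, π, hπ⟩ := Module.Finite.exists_fin' R K
    obtain ⟨π', r, hπ', -, hr⟩ :=
      hp.exists_ker (B := R ⧸ Ideal.span {x}) hs hx0 (isReduction_mkQ x (Fin m → R)) hK π hπ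
    rw [hasProjectiveDimensionLT_ker_iff hπ'] at h
    rw [hasProjectiveDimensionLT_ker_iff hπ]
    exact ih hr ((IsSMulRegular.pi fun _ ↦ hR).submodule _ _) h

end ProjectiveDimension

section RegularLocalRing

open IsLocalRing

variable {R : Type u} [CommRing R]

lemma IsLocalRing.spanFinrank_maximalIdeal_quotient_lt [IsLocalRing R] [IsNoetherianRing R] {x : R}
    (hx : x ∈ maximalIdeal R) (hx2 : x ∉ maximalIdeal R * maximalIdeal R)
    [IsLocalRing (R ⧸ Ideal.span {x})] :
    (maximalIdeal (R ⧸ Ideal.span {x})).spanFinrank < (maximalIdeal R).spanFinrank := by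
  classical
  obtain ⟨s, hs, hspan⟩ := Submodule.FG.exists_span_finset_card_eq_spanFinrank
    (IsNoetherian.noetherian (maximalIdeal R))
  obtain ⟨a, -, ha⟩ := Submodule.mem_span_finset.1 (hspan ▸ hx : x ∈ Submodule.span R (s : Set R))
  obtain ⟨y, hy, hay⟩ : ∃ y ∈ s, IsUnit (a y) := by
    by_contra! h
    refine hx2 (ha ▸ Ideal.sum_mem _ fun y hy ↦ Ideal.mul_mem_mul (h y hy) ?_)
    exact hspan ▸ Submodule.subset_span hy
  let mk := Ideal.Quotient.mk (Ideal.span {x})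
  have hmap : maximalIdeal (R ⧸ Ideal.span {x}) =
      Ideal.span (((s.erase y).image mk : Finset _) : Set (R ⧸ Ideal.span {x})) := by
    have h1 : maximalIdeal (R ⧸ Ideal.span {x}) = Ideal.map mk (Ideal.span (s : Set R)) := by
      rw [← map_maximalIdeal_of_surjective mk Ideal.Quotient.mk_surjective, ← hspan]
    rw [h1, Ideal.map_span]
    refine le_antisymm (Ideal.span_le.2 ?_) (Ideal.span_mono ?_)
    · rintro _ ⟨z, hz, rfl⟩
      by_cases hzy : z = y
      · subst hzy
        have h0 : mk x = 0 := Ideal.Quotient.eq_zero_iff_mem.2 (Ideal.mem_span_singleton_self x)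
        rw [congrArg mk ha.symm, map_sum, ← Finset.add_sum_erase _ _ hy, smul_eq_mul, map_mul] at h0
        rw [SetLike.mem_coe, ← Ideal.unit_mul_mem_iff_mem _ (hay.map mk),
          eq_neg_of_add_eq_zero_left h0]
        refine neg_mem (Ideal.sum_mem _ fun w hw ↦ ?_)
        rw [smul_eq_mul, map_mul]
        exact Ideal.mul_mem_left _ _ (Ideal.subset_span
          (Finset.mem_coe.2 (Finset.mem_image_of_mem _ hw)))
      · exact Ideal.subset_span (Finset.mem_coe.2
          (Finset.mem_image_of_mem _ (Finset.mem_erase.2 ⟨hzy, hz⟩)))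
    · rw [Finset.coe_image]
      exact Set.image_mono (Finset.coe_subset.2 (Finset.erase_subset _ _))
  rw [hmap, ← hs]
  refine (Submodule.spanFinrank_span_le_ncard_of_finite (Finset.finite_toSet _)).trans_lt ?_
  rw [Set.ncard_coe_finset]
  exact Finset.card_image_le.trans_lt (Finset.card_erase_lt_of_mem hy)

lemma IsRegularLocalRing.quotient_span_singleton [IsRegularLocalRing R] {x : R}
    (hx : x ∈ maximalIdeal R) (hx2 : x ∉ maximalIdeal R * maximalIdeal R) {d : ℕ}
    (hd : ringKrullDim R = (d + 1 : ℕ)) :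
    IsRegularLocalRing (R ⧸ Ideal.span {x}) ∧ ringKrullDim (R ⧸ Ideal.span {x}) = d := by
  have := IsLocalRing.quotient_span_singleton hx
  have h1 := IsLocalRing.spanFinrank_maximalIdeal_quotient_lt hx hx2
  have h2 := IsRegularLocalRing.spanFinrank_maximalIdeal (R := R)
  rw [hd, Nat.cast_inj] at h2
  have h3 := ringKrullDim_le_ringKrullDim_quotient_add_card ({x} : Finset R)
    (by simpa [ringJacobson_eq_maximalIdeal] using hx)
  have h4 := ringKrullDim_le_spanFinrank_maximalIdeal (R ⧸ Ideal.span {x})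
  rw [Finset.coe_singleton, Finset.card_singleton, hd, Nat.cast_add,
    ENat.WithBot.add_le_add_natCast_right_iff] at h3
  have h5 : (maximalIdeal (R ⧸ Ideal.span {x})).spanFinrank ≤ d := by omega
  have h6 : ringKrullDim (R ⧸ Ideal.span {x}) = d :=
    le_antisymm (h4.trans (Nat.cast_le.2 h5)) h3
  exact ⟨.of_spanFinrank_maximalIdeal_le _ (h6 ▸ Nat.cast_le.2 h5), h6⟩

lemma IsRegularLocalRing.maximalIdeal_eq_bot_iff [IsRegularLocalRing R] {d : ℕ}
    (hd : ringKrullDim R = d) : maximalIdeal R = ⊥ ↔ d = 0 := by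
  rw [← Submodule.spanFinrank_eq_zero_iff_eq_bot (IsNoetherian.noetherian _),
    ← Nat.cast_inj (R := WithBot ℕ∞), IsRegularLocalRing.spanFinrank_maximalIdeal, hd,
    Nat.cast_inj]

lemma IsRegularLocalRing.exists_mem_maximalIdeal [IsRegularLocalRing R] {d : ℕ}
    (hd : ringKrullDim R = (d + 1 : ℕ)) :
    ∃ x ∈ maximalIdeal R, x ∉ maximalIdeal R * maximalIdeal R ∧ ∀ p ∈ minimalPrimes R, x ∉ p := by
  by_contra! h
  have hcover : (maximalIdeal R : Set R) ⊆
      ⋃ I ∈ insert (maximalIdeal R * maximalIdeal R) (minimalPrimes R), (I : Set R) := by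
    intro x hx
    by_cases hx2 : x ∈ maximalIdeal R * maximalIdeal R
    · exact Set.mem_biUnion (Set.mem_insert _ _) hx2
    · obtain ⟨p, hp, hxp⟩ := h x hx hx2
      exact Set.mem_biUnion (Set.mem_insert_of_mem _ hp) hxp
  rw [Ideal.subset_union_prime_finite (f := fun I ↦ I)
    ((minimalPrimes.finite_of_isNoetherianRing R).insert _) (maximalIdeal R * maximalIdeal R)
    (maximalIdeal R * maximalIdeal R)
    (fun I hI hne _ ↦ ((Set.mem_insert_iff.1 hI).resolve_left hne).1.1)] at hcover
  obtain ⟨I, rfl | hI, hle⟩ := hcover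
  · have := Submodule.eq_bot_of_le_smul_of_le_jacobson_bot _ _
      (IsNoetherian.noetherian _) hle (maximalIdeal_le_jacobson _)
    exact Nat.succ_ne_zero d ((maximalIdeal_eq_bot_iff hd).1 this)
  · have hIp : I.IsPrime := hI.1.1
    obtain rfl : maximalIdeal R = I := le_antisymm hle (le_maximalIdeal hIp.ne_top)
    have hh := maximalIdeal_height_eq_ringKrullDim (R := R)
    rw [Ideal.height_eq_zero_iff.2 hI, hd] at hh
    exact Nat.succ_ne_zero d (by exact_mod_cast hh.symm)

lemma IsRegularLocalRing.isDomain [IsRegularLocalRing R] : IsDomain R := by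
  obtain ⟨d, hd⟩ : ∃ d : ℕ, ringKrullDim R = d :=
    ⟨_, (IsRegularLocalRing.spanFinrank_maximalIdeal (R := R)).symm⟩
  induction d generalizing R with
  | zero =>
    exact (isField_iff_maximalIdeal_eq.2 ((maximalIdeal_eq_bot_iff hd).2 rfl)).isDomain
  | succ d ih =>
    obtain ⟨x, hx, hx2, hxp⟩ := IsRegularLocalRing.exists_mem_maximalIdeal hd
    obtain ⟨_, hd'⟩ := IsRegularLocalRing.quotient_span_singleton hx hx2 hd
    have hprime : (Ideal.span {x}).IsPrime :=
      (Ideal.Quotient.isDomain_iff_prime _).1 (ih hd')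
    obtain ⟨p, hp, hpx⟩ := Ideal.exists_minimalPrimes_le (bot_le (a := Ideal.span {x}))
    have : p.IsPrime := hp.1.1
    have hp0 : p = ⊥ := by
      refine Submodule.eq_bot_of_le_smul_of_le_jacobson_bot (maximalIdeal R) p
        (IsNoetherian.noetherian p) (fun a ha ↦ ?_) (maximalIdeal_le_jacobson _)
      obtain ⟨b, rfl⟩ := Ideal.mem_span_singleton.1 (hpx ha)
      exact Submodule.smul_mem_smul hx ((this.mem_or_mem ha).resolve_left (hxp p hp))
    subst hp0
    exact IsDomain.of_bot_isPrime R

lemma IsRegularLocalRing.hasProjectiveDimensionLT [IsRegularLocalRing R] {d : ℕ}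
    (hd : ringKrullDim R = d) (N : Type u) [AddCommGroup N] [Module R N] [Module.Finite R N] :
    HasProjectiveDimensionLT (ModuleCat.of R N) (d + 1) := by
  induction d generalizing R N with
  | zero =>
    let _ := (isField_iff_maximalIdeal_eq.2 ((maximalIdeal_eq_bot_iff hd).2 rfl)).toField
    have : Module.Free R N := Module.Free.of_divisionRing R N
    infer_instance
  | succ d ih =>
    obtain ⟨x, hx, hx2, -⟩ := IsRegularLocalRing.exists_mem_maximalIdeal hd
    obtain ⟨_, hd'⟩ := IsRegularLocalRing.quotient_span_singleton hx hx2 hd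
    have := IsRegularLocalRing.isDomain (R := R)
    have hx0 : x ≠ 0 := by
      rintro rfl
      exact hx2 (zero_mem _)
    have hreg : IsSMulRegular R x := (isRegular_iff_ne_zero.2 hx0).left
    obtain ⟨m, π, hπ⟩ := Module.Finite.exists_fin' R N
    rw [hasProjectiveDimensionLT_ker_iff hπ]
    refine (isReduction_mkQ x (LinearMap.ker π)).hasProjectiveDimensionLT hx hreg
      ((IsSMulRegular.pi fun _ ↦ hreg).submodule _ _) d ?_
    have : Module.Finite (R ⧸ Ideal.span {x}) (QuotSMulTop x (LinearMap.ker π)) :=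
      .of_restrictScalars_finite R _ _
    exact ih hd' _

lemma IsRegularLocalRing.hasExtBound [IsRegularLocalRing R] {d : ℕ}
    (hd : ringKrullDim R = d) : HasExtBound R d := by
  intro N X _ _ _ _ _ _ i hi
  have := IsRegularLocalRing.hasProjectiveDimensionLT hd N
  exact HasProjectiveDimensionLT.subsingleton _ (d + 1) i hi _

end RegularLocalRing

lemma IsRegularLocal.isRegularLocalRing {Q : Type u} [CommRing Q] [IsLocalRing Q]
    (hQ : IsRegularLocal Q) : IsRegularLocalRing Q := by
  obtain ⟨_, s, hs, hcard⟩ := hQ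
  refine .of_spanFinrank_maximalIdeal_le _ (hcard ▸ Nat.cast_le.2 ?_)
  rw [← hs, ← Set.ncard_coe_finset]
  exact Submodule.spanFinrank_span_le_ncard_of_finite s.finite_toSet

theorem stmt_8 (Q : Type u) [CommRing Q] [IsLocalRing Q] (hQ : IsRegularLocal Q)
    (f : List Q) (hf : RingTheory.Sequence.IsRegular Q f)
    (M N : ModuleCat.{u} (Q ⧸ Ideal.ofList f))
    [Module.Finite (Q ⧸ Ideal.ofList f) M] [Module.Finite (Q ⧸ Ideal.ofList f) N]
    (htor : ∃ n : ℕ, ∀ i : ℕ, n ≤ i →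
      IsZero (((Tor (ModuleCat.{u} (Q ⧸ Ideal.ofList f)) i).obj M).obj N)) :
    ∀ i : ℕ, ringKrullDim (Q ⧸ Ideal.ofList f) < (i : WithBot ℕ∞) →
      IsZero (((Tor (ModuleCat.{u} (Q ⧸ Ideal.ofList f)) i).obj M).obj N) := by
  have := hQ.isRegularLocalRing
  obtain ⟨d, hd⟩ : ∃ d : ℕ, ringKrullDim Q = d :=
    ⟨_, (IsRegularLocalRing.spanFinrank_maximalIdeal (R := Q)).symm⟩
  have hdim := ringKrullDim_add_length_eq_ringKrullDim_of_isRegular f hf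
  rw [hd] at hdim
  obtain ⟨e, he⟩ : ∃ e : ℕ, ringKrullDim (Q ⧸ Ideal.ofList f) = e := by
    generalize ringKrullDim (Q ⧸ Ideal.ofList f) = w at hdim
    induction w with
    | bot => exact absurd hdim WithBot.bot_ne_coe
    | coe w =>
      induction w with
      | top => exact absurd (WithBot.coe_injective hdim) (ENat.top_ne_natCast d)
      | coe e => exact ⟨e, rfl⟩
  have hed : e + f.length = d := by
    rw [he] at hdim
    exact_mod_cast hdim
  have equiv : Q ≃+* Q ⧸ Ideal.ofList ([] : List Q) :=
    (RingEquiv.quotientBot Q).symm.trans (Ideal.quotEquivOfEq Ideal.ofList_nil.symm)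
  have := IsRegularLocalRing.of_ringEquiv equiv
  have hbound := (IsRegularLocalRing.hasExtBound
    (ringKrullDim_eq_of_ringEquiv equiv ▸ hd)).quotient_ofList hf.toIsWeaklyRegular (by omega)
  obtain ⟨n, hn⟩ := htor
  have hext : ∀ i, d - f.length < i →
      ExtVanishes (Q ⧸ Ideal.ofList f) (CharacterModule M) N i := by
    refine hbound N (CharacterModule M) ⟨n + 1, fun i hi ↦ ?_⟩
    obtain ⟨i, rfl⟩ := Nat.exists_eq_add_of_le' ((Nat.le_add_left 1 n).trans hi)
    exact (isZero_Tor_succ_iff_extVanishes M N i).1 (hn _ (by omega))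
  intro i hi
  rw [he, Nat.cast_lt] at hi
  obtain ⟨i, rfl⟩ := Nat.exists_eq_add_of_le' (Nat.zero_lt_of_lt hi)
  exact (isZero_Tor_succ_iff_extVanishes M N i).2 (hext _ (by omega))
end

section
/- Let R be a Noetherian local ring that is equidimensional (dim R/p = dim R for every minimal prime p of R) and catenary. Assume that (PS) holds for every localization of R: for every prime q of R and all nonzero finitely generated R_q-modules A and B with pd_{R_q} B < ∞ and A ⊗_{R_q} B of finite length, dim A ≤ grade B. Then for every nonzero finitely generated R-module N with pd_R N < ∞ and every minimal prime p of R, there exists a minimal prime q of N with p ⊆ q. -/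
/-!
STATEMENT 12: If `R` is an equidimensional catenary Noetherian local ring and the
Peskine–Szpiro statement (PS) holds at every localization of `R`, then for every nonzero
finitely generated `R`-module `N` of finite projective dimension and every minimal prime `p`
of `R` there is a minimal prime `q` of `N` with `p ⊆ q`.
-/

open CategoryTheory CategoryTheory.Limits

open scoped TensorProduct

universe u

/-- The Krull dimension of a commutative ring, valued in `WithBot ℕ∞`. -/
noncomputable def ringDim (R : Type u) [CommRing R] : WithBot ℕ∞ := ringKrullDim R

/-- The Krull dimension of a module `M`: the Krull dimension of `R ⧸ ann M`. -/
noncomputable def moduleDim (R : Type u) [CommRing R] (M : Type u) [AddCommGroup M]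
    [Module R M] : WithBot ℕ∞ :=
  ringDim (R ⧸ Module.annihilator R M)

/-- The grade of a module `M`: the supremum of lengths of `R`-regular sequences of elements
of `ann M`. -/
noncomputable def moduleGrade (R : Type u) [CommRing R] (M : Type u) [AddCommGroup M]
    [Module R M] : ℕ∞ :=
  sSup {n : ℕ∞ | ∃ rs : List R, n = (rs.length : ℕ∞) ∧
    (∀ x ∈ rs, x ∈ Module.annihilator R M) ∧ RingTheory.Sequence.IsRegular R rs}

/-- A module has finite projective dimension iff for some `n` the functors `Ext^i(M, -)`
vanish for all `i > n`. -/
def HasFinitePD (R : Type u) [CommRing R] (M : Type u) [AddCommGroup M] [Module R M] : Prop :=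
  ∃ n : ℕ, ∀ i : ℕ, n < i → ∀ L : ModuleCat.{u} R,
    IsZero (((Ext R (ModuleCat.{u} R) i).obj (Opposite.op (ModuleCat.of R M))).obj L)

/-- A chain of primes is saturated if there is no prime strictly between two consecutive
entries. -/
def IsSaturatedChain (R : Type u) [CommRing R] (l : LTSeries (PrimeSpectrum R)) : Prop :=
  ∀ i : Fin l.length, ¬ ∃ x : PrimeSpectrum R, l i.castSucc < x ∧ x < l i.succ

/-- A ring is catenary if for any primes `p ⊆ q` all saturated chains of primes from `p` to `q`
have the same length. -/
def IsCatenary (R : Type u) [CommRing R] : Prop :=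
  ∀ p q : PrimeSpectrum R, p ≤ q →
    ∀ l₁ l₂ : LTSeries (PrimeSpectrum R),
      l₁.head = p → l₁.last = q → l₂.head = p → l₂.last = q →
      IsSaturatedChain R l₁ → IsSaturatedChain R l₂ → l₁.length = l₂.length

lemma isZero_Ext_succ_iff {R : Type u} [CommRing R] {X : ModuleCat.{u} R}
    (P : ProjectiveResolution X) (i : ℕ) (L : ModuleCat.{u} R) :
    IsZero (((Ext R (ModuleCat.{u} R) (i + 1)).obj (Opposite.op X)).obj L) ↔
      ∀ g : P.complex.X (i + 1) ⟶ L, P.complex.d (i + 2) (i + 1) ≫ g = 0 →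
        ∃ h : P.complex.X i ⟶ L, P.complex.d (i + 1) i ≫ h = g := by
  rw [(P.isoExt (i + 1) L).isZero_iff, ← HomologicalComplex.exactAt_iff_isZero_homology,
    HomologicalComplex.exactAt_iff' _ i (i + 1) (i + 2) (by simp) (by simp),
    ShortComplex.moduleCat_exact_iff]
  rfl

instance {R S : Type u} [CommRing R] [CommRing S] (f : R →+* S) :
    (ModuleCat.extendScalars.{u, u, u} f).Additive :=
  (ModuleCat.extendRestrictScalarsAdj f).left_adjoint_additive

lemma HasFinitePD.extendScalars {R S : Type u} [CommRing R] [CommRing S] (f : R →+* S)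
    (hf : f.Flat) {N : Type u} [AddCommGroup N] [Module R N] (h : HasFinitePD R N) :
    HasFinitePD S ((ModuleCat.extendScalars.{u, u, u} f).obj (ModuleCat.of R N)) := by
  obtain ⟨n, hn⟩ := h
  refine ⟨n, fun i hi L ↦ ?_⟩
  obtain ⟨i, rfl⟩ := Nat.exists_eq_add_one_of_ne_zero (Nat.ne_zero_of_lt hi)
  have adj := ModuleCat.extendRestrictScalarsAdj.{u, u, u} f
  have := ModuleCat.preservesFiniteLimits_extendScalars_of_flat hf
  have : PreservesFiniteColimits (ModuleCat.extendScalars.{u, u, u} f) :=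
    ⟨fun _ _ _ ↦ adj.leftAdjoint_preservesColimits.preservesColimitsOfShape⟩
  have : (ModuleCat.extendScalars.{u, u, u} f).PreservesProjectiveObjects :=
    Functor.preservesProjectiveObjects_of_adjunction_of_preservesEpimorphisms adj
  let P := projectiveResolution (ModuleCat.of R N)
  suffices H : ∀ g : (ModuleCat.extendScalars.{u, u, u} f).obj (P.complex.X (i + 1)) ⟶ L,
      (ModuleCat.extendScalars.{u, u, u} f).map (P.complex.d (i + 2) (i + 1)) ≫ g = 0 →
      ∃ h : (ModuleCat.extendScalars.{u, u, u} f).obj (P.complex.X i) ⟶ L,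
        (ModuleCat.extendScalars.{u, u, u} f).map (P.complex.d (i + 1) i) ≫ h = g from
    (isZero_Ext_succ_iff ((ModuleCat.extendScalars.{u, u, u} f).mapProjectiveResolution P)
      i L).2 H
  intro g hg
  obtain ⟨h, hh⟩ := (isZero_Ext_succ_iff P i _).1
    (hn (i + 1) hi ((ModuleCat.restrictScalars f).obj L)) (adj.homEquiv _ _ g) (by
      rw [← adj.homEquiv_naturality_left, hg, adj.homEquiv_unit, Functor.map_zero, comp_zero])
  exact ⟨(adj.homEquiv _ _).symm h, by
    rw [← adj.homEquiv_naturality_left_symm, hh, Equiv.symm_apply_apply]⟩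

lemma HasFinitePD.baseChange {R S : Type u} [CommRing R] [CommRing S] [alg : Algebra R S]
    [Module.Flat R S] {N : Type u} [AddCommGroup N] [Module R N] (h : HasFinitePD R N) :
    HasFinitePD S (S ⊗[R] N) := by
  have hf : (algebraMap R S).Flat := by rwa [RingHom.flat_algebraMap_iff]
  have halg : alg = (algebraMap R S).toAlgebra := Algebra.algebra_ext _ _ fun _ ↦ rfl
  generalize algebraMap R S = f at hf halg
  subst halg
  exact h.extendScalars f hf

lemma LTSeries.exists_head_eq_last_eq {α : Type*} [PartialOrder α] (s : LTSeries α) {a b : α}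
    (ha : a ≤ s.head) (hb : s.last ≤ b) :
    ∃ t : LTSeries α, t.head = a ∧ t.last = b ∧ s.length ≤ t.length := by
  obtain ⟨t, ht, htl, hst⟩ : ∃ t : LTSeries α, t.head = a ∧ t.last = s.last ∧
      s.length ≤ t.length := by
    obtain rfl | hlt := ha.eq_or_lt
    · exact ⟨s, rfl, rfl, le_rfl⟩
    · exact ⟨s.cons a hlt, by simp, by simp, by simp⟩
  obtain rfl | hlt := hb.eq_or_lt
  · exact ⟨t, ht, htl, hst⟩
  · exact ⟨t.snoc b (by simpa [htl] using hlt), by simpa using ht, by simp,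
      hst.trans (by simp)⟩

section Chains

variable {R : Type u} [CommRing R]

/-- A chain of primes between `p` and `q` refines to a saturated chain from `p` to `q`. -/
lemma exists_isSaturatedChain_ge [FiniteRingKrullDim R] (s : LTSeries (PrimeSpectrum R))
    {p q : PrimeSpectrum R} (hp : p ≤ s.head) (hq : s.last ≤ q) :
    ∃ t : LTSeries (PrimeSpectrum R), IsSaturatedChain R t ∧ t.head = p ∧
      t.last = q ∧ s.length ≤ t.length := by
  obtain ⟨s', rfl, rfl, hs'⟩ := s.exists_head_eq_last_eq hp hq
  have : WellFoundedLT (PrimeSpectrum R) :=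
    ⟨SetRel.IsWellFounded.of_finiteDimensional {(a, b) : PrimeSpectrum R × PrimeSpectrum R | a < b}⟩
  have : WellFoundedGT (PrimeSpectrum R) :=
    ⟨SetRel.IsWellFounded.inv_of_finiteDimensional
      {(a, b) : PrimeSpectrum R × PrimeSpectrum R | a < b}⟩
  obtain ⟨t, i, hi, h0, hl⟩ := s'.exists_relSeries_covBy
  refine ⟨⟨t.length, t, fun j ↦ (t.step j).lt⟩, fun j ⟨x, h₁, h₂⟩ ↦ (t.step j).2 h₁ h₂, ?_, ?_, ?_⟩
  · exact (congrArg t h0.symm).trans (congrFun hi 0)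
  · exact (congrArg t hl.symm).trans (congrFun hi (.last _))
  · exact hs'.trans (by simpa using Fintype.card_le_of_embedding i)

lemma exists_isSaturatedChain_of_le [FiniteRingKrullDim R] {p q : PrimeSpectrum R} (hpq : p ≤ q) :
    ∃ t : LTSeries (PrimeSpectrum R), IsSaturatedChain R t ∧ t.head = p ∧ t.last = q := by
  obtain ⟨t, ht, h₁, h₂, -⟩ :=
    exists_isSaturatedChain_ge (RelSeries.singleton _ p : LTSeries (PrimeSpectrum R)) le_rfl hpq
  exact ⟨t, ht, h₁, h₂⟩

lemma IsSaturatedChain.smash {s t : LTSeries (PrimeSpectrum R)} (hs : IsSaturatedChain R s)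
    (ht : IsSaturatedChain R t) (h : s.last = t.head) :
    IsSaturatedChain R (RelSeries.smash s t h) := by
  refine Fin.addCases (m := s.length) (n := t.length) (fun j ↦ ?_) (fun j ↦ ?_)
  · have := hs j
    rwa [← RelSeries.smash_castAdd h, ← RelSeries.smash_succ_castAdd h] at this
  · have := ht j
    rwa [← RelSeries.smash_natAdd h, ← RelSeries.smash_succ_natAdd h] at this

/-- In a catenary Noetherian local ring, a saturated chain from a prime `p` to the maximal ideal
has length `dim R/p`. -/
lemma IsCatenary.length_eq [IsLocalRing R] [IsNoetherianRing R] (hcat : IsCatenary R)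
    {s : LTSeries (PrimeSpectrum R)} (hs : IsSaturatedChain R s)
    (hlast : s.last = IsLocalRing.closedPoint R) :
    (s.length : WithBot ℕ∞) = ringKrullDim (R ⧸ s.head.asIdeal) := by
  rw [ringKrullDim_quotient]
  apply le_antisymm
  · exact Order.LTSeries.length_le_krullDim (α := PrimeSpectrum.zeroLocus (s.head.asIdeal : Set R))
      ⟨s.length, fun i ↦ ⟨s i, s.head_le i⟩, s.step⟩
  · refine iSup_le fun l ↦ ?_
    obtain ⟨t, ht, hth, htl, hlt⟩ := exists_isSaturatedChain_ge (l.map Subtype.val fun _ _ h ↦ h)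
      (p := s.head) (q := IsLocalRing.closedPoint R) l.head.2
      (IsLocalRing.le_maximalIdeal l.last.1.2.ne_top)
    rw [hcat s.head s.last (LTSeries.head_le_last s) s t rfl rfl hth (htl.trans hlast.symm) hs ht]
    exact_mod_cast hlt

/-- In an equidimensional catenary Noetherian local ring, `dim R_q ≤ dim (R_q / p R_q)` for every
minimal prime `p` contained in `q`. -/
lemma IsCatenary.ringKrullDim_localization_le [IsLocalRing R] [IsNoetherianRing R]
    (hcat : IsCatenary R) (hequi : ∀ p ∈ minimalPrimes R, ringKrullDim (R ⧸ p) = ringKrullDim R)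
    {p q : Ideal R} [q.IsPrime] (hp : p ∈ minimalPrimes R) (hpq : p ≤ q) :
    ringKrullDim (Localization.AtPrime q) ≤
      ringKrullDim (Localization.AtPrime q ⧸ p.map (algebraMap R (Localization.AtPrime q))) := by
  have hpp : p.IsPrime := hp.1.1
  let P : PrimeSpectrum R := ⟨p, hpp⟩
  let Q : PrimeSpectrum R := ⟨q, inferInstance⟩
  obtain ⟨s, hs, hsh, hsl⟩ := exists_isSaturatedChain_of_le (show P ≤ Q from hpq)
  obtain ⟨t, ht, hth, htl⟩ := exists_isSaturatedChain_of_le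
    (show Q ≤ IsLocalRing.closedPoint R from IsLocalRing.le_maximalIdeal Q.2.ne_top)
  have key : ∀ v : LTSeries (PrimeSpectrum R), IsSaturatedChain R v →
      v.head.asIdeal ∈ minimalPrimes R → v.last = Q →
      (((v.length + t.length : ℕ) : ℕ∞) : WithBot ℕ∞) = ringKrullDim R := by
    intro v hv hvh hvl
    have := hcat.length_eq (hv.smash ht (hvl.trans hth.symm)) (by simpa using htl)
    rw [RelSeries.head_smash, hequi _ hvh] at this
    exact this
  calc ringKrullDim (Localization.AtPrime q)
      = Order.krullDim (Set.Iic Q) := Order.krullDim_eq_of_orderIso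
        (IsLocalization.AtPrime.primeSpectrumOrderIso (Localization.AtPrime q) q)
    _ ≤ s.length := by
      refine iSup_le fun l ↦ ?_
      obtain ⟨p', hp', hle⟩ := Ideal.exists_minimalPrimes_le (I := ⊥) (J := l.head.1.asIdeal) bot_le
      obtain ⟨v, hv, hvh, hvl, hlv⟩ := exists_isSaturatedChain_ge (l.map Subtype.val fun _ _ h ↦ h)
        (p := ⟨p', hp'.1.1⟩) (q := Q) hle l.last.2
      have h := (key v hv (by rw [hvh]; exact hp') hvl).trans
        (key s hs (by rw [hsh]; exact hp) hsl).symm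
      have h' : v.length + t.length = s.length + t.length := by exact_mod_cast h
      have h'' : l.length ≤ s.length := le_trans hlv (by lia)
      exact_mod_cast h''
    _ ≤ _ := by
      rw [ringKrullDim_quotient]
      let e := IsLocalization.AtPrime.primeSpectrumOrderIso (Localization.AtPrime q) q
      refine Order.LTSeries.length_le_krullDim (α := PrimeSpectrum.zeroLocus
        (p.map (algebraMap R (Localization.AtPrime q)) : Set (Localization.AtPrime q)))
        ⟨s.length, fun i ↦ ⟨e.symm ⟨s i, (LTSeries.monotone s (Fin.le_last i)).trans hsl.le⟩, ?_⟩,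
          fun i ↦ ?_⟩
      · exact Ideal.map_mono (hsh.symm.le.trans (s.head_le i))
      · exact e.symm.strictMono (s.step i)

end Chains

lemma exists_smul_mem_annihilator {R : Type*} [CommRing R] (S : Submonoid R) {N N' : Type*}
    [AddCommGroup N] [Module R N] [Module.Finite R N] [AddCommGroup N'] [Module R N']
    (f : N →ₗ[R] N') [IsLocalizedModule S f] {a : R} (ha : a ∈ Module.annihilator R N') :
    ∃ s ∈ S, s * a ∈ Module.annihilator R N := by
  obtain ⟨t, ht⟩ := Module.Finite.fg_top (R := R) (M := N)
  have h : ∀ n : N, ∃ s : S, (s * a : R) • n = 0 := fun n ↦ by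
    obtain ⟨s, hs⟩ := (IsLocalizedModule.eq_zero_iff S f (m := a • n)).1
      (by rw [map_smul, Module.mem_annihilator.1 ha])
    exact ⟨s, by rw [mul_smul]; exact hs⟩
  choose s hs using h
  refine ⟨∏ n ∈ t, (s n : R), prod_mem fun n _ ↦ (s n).2, ?_⟩
  rw [← Submodule.annihilator_top, ← ht, Submodule.mem_annihilator_span]
  rintro ⟨n, hn⟩
  obtain ⟨c, hc⟩ := Finset.dvd_prod_of_mem (fun n ↦ (s n : R)) hn
  rw [hc, mul_right_comm, mul_comm, mul_smul, hs, smul_zero]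

/-- A finitely generated module killed by an ideal `I` with `R ⧸ I` Artinian has finite length. -/
lemma isFiniteLength_of_le_annihilator {R M : Type*} [CommRing R] [IsNoetherianRing R]
    [AddCommGroup M] [Module R M] [Module.Finite R M] {I : Ideal R} [IsArtinianRing (R ⧸ I)]
    (hI : I ≤ Module.annihilator R M) : IsFiniteLength R M := by
  have hM : Module.IsTorsionBySet R M I := fun m x ↦ Module.mem_annihilator.1 (hI x.2) m
  let := hM.module
  have : IsScalarTower R (R ⧸ I) M := hM.isScalarTower
  have := Module.Finite.of_restrictScalars_finite R (R ⧸ I) M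
  exact isFiniteLength_iff_isNoetherian_isArtinian.2 ⟨inferInstance,
    isArtinian_of_surjective_algebraMap (R := R ⧸ I) Ideal.Quotient.mk_surjective⟩

lemma isMaximal_of_ringKrullDim_le_moduleGrade {S : Type u} [CommRing S] [IsLocalRing S]
    [IsNoetherianRing S] {B : Type u} [AddCommGroup B] [Module S B]
    (h : ringKrullDim S ≤ (moduleGrade S B : WithBot ℕ∞)) {Q : Ideal S} [hQ : Q.IsPrime]
    (hBQ : Module.annihilator S B ≤ Q) : Q.IsMaximal := by
  obtain ⟨n, hn⟩ : ∃ n : ℕ, ringKrullDim S = n := by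
    obtain ⟨m, hm⟩ := WithBot.ne_bot_iff_exists.1 (ringKrullDim_ne_bot (R := S))
    have hm' : m ≠ ⊤ := by
      rintro rfl
      exact ringKrullDim_ne_top (R := S) hm.symm
    lift m to ℕ using hm'
    exact ⟨m, hm.symm⟩
  obtain ⟨rs, hlen, hann, hreg⟩ : ∃ rs : List S, n ≤ rs.length ∧
      (∀ x ∈ rs, x ∈ Module.annihilator S B) ∧ RingTheory.Sequence.IsRegular S rs := by
    rw [hn] at h
    have h : (n : ℕ∞) ≤ moduleGrade S B := by exact_mod_cast h
    cases n with
    | zero => exact ⟨[], le_rfl, by simp, .nil S S⟩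
    | succ n =>
      have h : (n : ℕ∞) < moduleGrade S B := lt_of_lt_of_le (by exact_mod_cast n.lt_succ_self) h
      obtain ⟨_, ⟨rs, rfl, hrs⟩, hlt⟩ := lt_sSup_iff.1 h
      exact ⟨rs, by exact_mod_cast hlt, hrs⟩
  have hdim := ringKrullDim_add_length_eq_ringKrullDim_of_isRegular rs hreg
  have h0 : ringKrullDim (S ⧸ Ideal.ofList rs) ≤ 0 := by
    have h1 : ringKrullDim (S ⧸ Ideal.ofList rs) + rs.length ≤ 0 + rs.length := by
      rw [hdim, hn, zero_add]
      exact_mod_cast hlen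
    generalize ringKrullDim (S ⧸ Ideal.ofList rs) = d at h1
    induction d with
    | bot => exact bot_le
    | coe d =>
      have h2 : d + rs.length ≤ 0 + rs.length := by exact_mod_cast h1
      exact_mod_cast (ENat.add_le_add_iff_right (ENat.natCast_ne_top _)).1 h2
  rw [ringKrullDim_quotient, Order.krullDim_nonpos_iff_forall_isMax] at h0
  have hle : Ideal.ofList rs ≤ Q := Ideal.span_le.2 fun x hx ↦ hBQ (hann x hx)
  have hmax := h0 ⟨⟨Q, hQ⟩, hle⟩
  have hQm : Q ≤ IsLocalRing.maximalIdeal S := IsLocalRing.le_maximalIdeal hQ.ne_top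
  have : Q = IsLocalRing.maximalIdeal S :=
    hQm.antisymm (hmax (b := ⟨IsLocalRing.closedPoint S, hle.trans hQm⟩) hQm)
  rw [this]; infer_instance

lemma isArtinianRing_localization_quotient {R : Type*} [CommRing R] [IsNoetherianRing R]
    {I q : Ideal R} [q.IsPrime] (hq : q ∈ I.minimalPrimes) :
    IsArtinianRing (Localization.AtPrime q ⧸ I.map (algebraMap R (Localization.AtPrime q))) := by
  refine IsLocalRing.quotient_artinian_of_mem_minimalPrimes_of_isLocalRing _ ?_
  rw [IsLocalization.minimalPrimes_map q.primeCompl (Localization.AtPrime q) I, Set.mem_preimage,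
    Localization.AtPrime.under_maximalIdeal]
  exact hq

lemma annihilator_sup_le_annihilator_tensorProduct (R M N : Type*) [CommRing R]
    [AddCommGroup M] [Module R M] [AddCommGroup N] [Module R N] :
    Module.annihilator R M ⊔ Module.annihilator R N ≤ Module.annihilator R (M ⊗[R] N) := by
  refine sup_le (fun a ha ↦ ?_) (fun a ha ↦ ?_) <;>
  · rw [Module.mem_annihilator] at ha ⊢
    intro x
    induction x with
    | zero => exact smul_zero _
    | add x y hx hy => rw [smul_add, hx, hy, add_zero]
    | tmul m n => first
      | rw [TensorProduct.smul_tmul', ha, TensorProduct.zero_tmul]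
      | rw [← TensorProduct.tmul_smul, ha, TensorProduct.tmul_zero]

lemma map_annihilator_le_annihilator_tensorProduct (R S N : Type*) [CommRing R]
    [CommRing S] [Algebra R S] [AddCommGroup N] [Module R N] :
    (Module.annihilator R N).map (algebraMap R S) ≤ Module.annihilator S (S ⊗[R] N) := by
  refine Ideal.map_le_iff_le_comap.2 fun a ha ↦ ?_
  rw [Ideal.mem_comap, Module.mem_annihilator]
  intro x
  rw [algebraMap_smul]
  exact Module.mem_annihilator.1
    (annihilator_sup_le_annihilator_tensorProduct R S N (Ideal.mem_sup_right ha)) x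

/-- Primes between `ann N` and `q` extend to primes of `R_q` containing the annihilator of the
localized module. -/
lemma annihilator_localization_le_map {R : Type*} [CommRing R] {q q' : Ideal R} [q.IsPrime]
    [q'.IsPrime] (hqq' : q' ≤ q) {N : Type*} [AddCommGroup N] [Module R N] [Module.Finite R N]
    (h : Module.annihilator R N ≤ q') :
    Module.annihilator (Localization.AtPrime q) (Localization.AtPrime q ⊗[R] N) ≤
      q'.map (algebraMap R (Localization.AtPrime q)) := by
  intro x hx
  obtain ⟨a, s, rfl⟩ := IsLocalization.exists_mk'_eq q.primeCompl x
  rw [IsLocalization.mk'_mem_iff]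
  refine Ideal.mem_map_of_mem _ ?_
  have ha : a ∈ Module.annihilator R (Localization.AtPrime q ⊗[R] N) := by
    rw [Module.mem_annihilator]
    intro y
    rw [← algebraMap_smul (Localization.AtPrime q), ← IsLocalization.mk'_spec' _ a s, mul_smul,
      Module.mem_annihilator.1 hx, smul_zero]
  obtain ⟨t, ht, hta⟩ := exists_smul_mem_annihilator q.primeCompl
    (TensorProduct.mk R (Localization.AtPrime q) N 1) ha
  exact (Ideal.IsPrime.mem_or_mem ‹_› (h hta)).resolve_left fun h' ↦ ht (hqq' h')

theorem stmt_12 (R : Type u) [CommRing R] [IsLocalRing R] [IsNoetherianRing R]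
    (hequi : ∀ p ∈ minimalPrimes R, ringDim (R ⧸ p) = ringDim R)
    (hcat : IsCatenary R)
    (hPSloc : ∀ (q : Ideal R) [q.IsPrime],
      ∀ (A B : Type u) [AddCommGroup A] [Module (Localization.AtPrime q) A]
        [AddCommGroup B] [Module (Localization.AtPrime q) B]
        [Module.Finite (Localization.AtPrime q) A] [Module.Finite (Localization.AtPrime q) B]
        [Nontrivial A] [Nontrivial B],
        HasFinitePD (Localization.AtPrime q) B →
        IsFiniteLength (Localization.AtPrime q) (A ⊗[Localization.AtPrime q] B) →
        moduleDim (Localization.AtPrime q) A ≤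
          (moduleGrade (Localization.AtPrime q) B : WithBot ℕ∞)) :
    ∀ (N : Type u) [AddCommGroup N] [Module R N] [Module.Finite R N] [Nontrivial N],
      HasFinitePD R N →
      ∀ p ∈ minimalPrimes R, ∃ q ∈ (Module.annihilator R N).minimalPrimes, p ≤ q := by
  intro N _ _ _ _ hN p hp
  have hpprime : p.IsPrime := hp.1.1
  have hne : p ⊔ Module.annihilator R N ≤ IsLocalRing.maximalIdeal R :=
    sup_le (IsLocalRing.le_maximalIdeal hpprime.ne_top)
      (IsLocalRing.le_maximalIdeal (by
        rwa [Ne, Module.annihilator_eq_top_iff, not_subsingleton_iff_nontrivial]))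
  obtain ⟨q, hq, -⟩ := Ideal.exists_minimalPrimes_le hne
  have hqprime : q.IsPrime := hq.1.1
  have hpq : p ≤ q := le_sup_left.trans hq.1.2
  have hNq : Module.annihilator R N ≤ q := le_sup_right.trans hq.1.2
  refine ⟨q, ⟨⟨hqprime, hNq⟩, fun q' ⟨hq', hNq'⟩ hle ↦ ?_⟩, hpq⟩
  let S := Localization.AtPrime q
  have hpS : p.map (algebraMap R S) ≠ ⊤ :=
    (Ideal.isPrime_map_of_isLocalizationAtPrime q hpq).ne_top
  have hBm : Module.annihilator S (S ⊗[R] N) ≤ q.map (algebraMap R S) :=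
    annihilator_localization_le_map le_rfl hNq
  have : Nontrivial (S ⧸ p.map (algebraMap R S)) := Ideal.Quotient.nontrivial_iff.2 hpS
  have : Nontrivial (S ⊗[R] N) := by
    rw [← not_subsingleton_iff_nontrivial, ← Module.annihilator_eq_top_iff (R := S)]
    intro h
    exact (Ideal.isPrime_map_of_isLocalizationAtPrime q (S := S) le_rfl).ne_top
      (top_le_iff.1 (h ▸ hBm))
  have := isArtinianRing_localization_quotient hq
  have hfl : IsFiniteLength S ((S ⧸ p.map (algebraMap R S)) ⊗[S] (S ⊗[R] N)) := by
    refine isFiniteLength_of_le_annihilator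
      (I := (p ⊔ Module.annihilator R N).map (algebraMap R S)) ?_
    rw [Ideal.map_sup]
    refine le_trans (sup_le_sup ?_ (map_annihilator_le_annihilator_tensorProduct R S N))
      (annihilator_sup_le_annihilator_tensorProduct S (S ⧸ p.map (algebraMap R S)) (S ⊗[R] N))
    exact Ideal.annihilator_quotient.ge
  have hPS := hPSloc q (S ⧸ p.map (algebraMap R S)) (S ⊗[R] N) hN.baseChange hfl
  rw [moduleDim, Ideal.annihilator_quotient] at hPS
  have hmax := isMaximal_of_ringKrullDim_le_moduleGrade
    ((hcat.ringKrullDim_localization_le hequi hp hpq).trans hPS)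
    (hQ := Ideal.isPrime_map_of_isLocalizationAtPrime q hle)
    (annihilator_localization_le_map hle hNq')
  rw [← Ideal.under_map_of_isLocalizationAtPrime q (S := S) hle,
    IsLocalRing.eq_maximalIdeal hmax, Localization.AtPrime.under_maximalIdeal]
end

section
/- Let R be a Noetherian local ring such that R_q is equidimensional for every prime q of R, and assume (DE) holds for every localization: for every prime q and all nonzero finitely generated R_q-modules A and B with Tor_i^{R_q}(A,B) = 0 for all i > 0, one has dim A + dim B = dim R_q + dim(A ⊗_{R_q} B). Let N be a nonzero finitely generated R-module with pd_R N < ∞, and suppose that for every minimal prime p of R and every prime q minimal over p + ann(N), there exists a nonzero finitely generated maximal Cohen–Macaulay module over (R/p)_q. Then every minimal prime of R is contained in some minimal prime of N. -/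
/-!
STATEMENT 13: Let `R` be a Noetherian local ring whose localizations are all equidimensional,
satisfying the dimension formula (DE) at every localization. Let `N` be a nonzero finitely
generated `R`-module of finite projective dimension such that for every minimal prime `p` of
`R` and every prime `q` minimal over `p + ann N` there is a nonzero finitely generated maximal
Cohen–Macaulay module over `(R/p)_q`. Then every minimal prime of `R` is contained in some
minimal prime of `N`.
-/

open CategoryTheory CategoryTheory.Limits

open scoped TensorProduct

universe u

/-- The depth of a module over a Noetherian local ring: the supremum of lengths of `M`-regular
sequences of elements of the maximal ideal. -/
noncomputable def moduleDepth (R : Type u) [CommRing R] [IsLocalRing R]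
    (M : Type u) [AddCommGroup M] [Module R M] : ℕ∞ :=
  sSup {n : ℕ∞ | ∃ rs : List R, n = (rs.length : ℕ∞) ∧
    (∀ x ∈ rs, x ∈ IsLocalRing.maximalIdeal R) ∧ RingTheory.Sequence.IsRegular M rs}

/-- `X` has depth at least `t` over the local ring `S`, measured by the vanishing of
`Ext^i(k, X)` for `i < t`. -/
def ExtDepthGE (S : Type u) [CommRing S] [IsLocalRing S] (t : ℕ) (X : ModuleCat.{u} S) : Prop :=
  ∀ i < t, Subsingleton (Abelian.Ext (ModuleCat.of S (IsLocalRing.ResidueField S)) X i)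

section ExtDepth

variable {S : Type u} [CommRing S] [IsLocalRing S]

lemma ExtDepthGE.mono {s t : ℕ} (h : s ≤ t) {X : ModuleCat.{u} S} (hX : ExtDepthGE S t X) :
    ExtDepthGE S s X :=
  fun i hi => hX i (hi.trans_le h)

lemma mem_annihilator_residueField {a : S} (ha : a ∈ IsLocalRing.maximalIdeal S) :
    a ∈ Module.annihilator S (IsLocalRing.ResidueField S) := by
  rw [Module.mem_annihilator]
  intro x
  rw [Algebra.smul_def, IsLocalRing.ResidueField.algebraMap_eq,
    (IsLocalRing.residue_eq_zero_iff a).mpr ha, zero_mul]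

lemma smul_ext_residueField_eq_zero {a : S} (ha : a ∈ IsLocalRing.maximalIdeal S)
    {X : ModuleCat.{u} S} {i : ℕ}
    (e : Abelian.Ext (ModuleCat.of S (IsLocalRing.ResidueField S)) X i) : a • e = 0 := by
  have h0 : a • 𝟙 (ModuleCat.of S (IsLocalRing.ResidueField S)) = 0 := by
    ext x
    exact Module.mem_annihilator.mp (mem_annihilator_residueField ha) x
  calc a • e = a • ((Abelian.Ext.mk₀ (𝟙 _)).comp e (zero_add i)) := by
        rw [Abelian.Ext.mk₀_id_comp]
    _ = (Abelian.Ext.mk₀ (a • 𝟙 _)).comp e (zero_add i) := by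
        rw [Abelian.Ext.mk₀_smul, Abelian.Ext.smul_comp]
    _ = 0 := by rw [h0, Abelian.Ext.mk₀_zero, Abelian.Ext.zero_comp]

lemma extDepthGE_of_isWeaklyRegular (rs : List S)
    (mem : ∀ r ∈ rs, r ∈ IsLocalRing.maximalIdeal S) (X : ModuleCat.{u} S)
    (reg : RingTheory.Sequence.IsWeaklyRegular X rs) : ExtDepthGE S rs.length X := by
  induction rs generalizing X with
  | nil => exact fun i hi => by simp at hi
  | cons a rs ih =>
    rw [RingTheory.Sequence.isWeaklyRegular_cons_iff] at reg
    have ha := mem a List.mem_cons_self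
    have ih' := ih (fun r hr => mem r (List.mem_cons_of_mem _ hr))
      (ModuleCat.of S (QuotSMulTop a X)) reg.2
    have hS := reg.1.smulShortComplex_shortExact
    intro i hi
    refine subsingleton_of_forall_eq 0 fun e => ?_
    have hid : e.comp (Abelian.Ext.mk₀ (a • 𝟙 X)) (add_zero i) = 0 := by
      rw [Abelian.Ext.mk₀_smul, Abelian.Ext.comp_smul, Abelian.Ext.comp_mk₀_id]
      exact smul_ext_residueField_eq_zero ha e
    have he : e.comp (Abelian.Ext.mk₀ (X.smulShortComplex a).f) (add_zero i) = 0 := hid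
    cases i with
    | zero =>
      have := hS.mono_f
      exact Abelian.Ext.postcomp_mk₀_injective_of_mono _ (X.smulShortComplex a).f
        (he.trans (map_zero ((Abelian.Ext.mk₀ (X.smulShortComplex a).f).postcomp _ _)).symm)
    | succ i =>
      obtain ⟨y, rfl⟩ := Abelian.Ext.covariant_sequence_exact₁ _ hS e he rfl
      have : Subsingleton (Abelian.Ext _ (X.smulShortComplex a).X₃ i) := ih' i (by simpa using hi)
      rw [Subsingleton.elim y 0, Abelian.Ext.zero_comp]
      rfl

lemma ExtDepthGE.of_shortExact {T : ShortComplex (ModuleCat.{u} S)} (hT : T.ShortExact) {t : ℕ}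
    (h₁ : ExtDepthGE S (t + 1) T.X₁) (h₂ : ExtDepthGE S t T.X₂) : ExtDepthGE S t T.X₃ := by
  intro i hi
  refine subsingleton_of_forall_eq 0 fun e => ?_
  have := h₁ (i + 1) (by omega)
  have := h₂ i hi
  obtain ⟨y, rfl⟩ := Abelian.Ext.covariant_sequence_exact₃ _ hT e rfl (Subsingleton.elim _ _)
  rw [Subsingleton.elim y 0, Abelian.Ext.zero_comp]

lemma ExtDepthGE.eq_zero_of_maximalIdeal_smul {X : ModuleCat.{u} S} (hX : ExtDepthGE S 1 X)
    (x : X) (hx : ∀ a ∈ IsLocalRing.maximalIdeal S, a • x = 0) : x = 0 := by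
  have : Subsingleton (ModuleCat.of S (IsLocalRing.ResidueField S) ⟶ X) :=
    Abelian.Ext.addEquiv₀.subsingleton_congr.mp (hX 0 one_pos)
  let f : IsLocalRing.ResidueField S →ₗ[S] X :=
    Submodule.liftQ (IsLocalRing.maximalIdeal S) (LinearMap.toSpanSingleton S X x)
      (fun a ha => hx a ha)
  have hf : f = 0 := congrArg ModuleCat.Hom.hom (Subsingleton.elim (ModuleCat.ofHom f) 0)
  have h1 : f (Submodule.Quotient.mk 1) = x := by
    simp only [f]
    erw [Submodule.liftQ_apply]
    simp
  rw [← h1, hf]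
  rfl

lemma ExtDepthGE.eq_zero_of_maximalIdeal_pow_smul {X : ModuleCat.{u} S} (hX : ExtDepthGE S 1 X)
    (k : ℕ) (x : X) (hx : ∀ a ∈ IsLocalRing.maximalIdeal S ^ k, a • x = 0) : x = 0 := by
  induction k with
  | zero => simpa using hx 1 (by simp)
  | succ k ih =>
    refine ih fun b hb => hX.eq_zero_of_maximalIdeal_smul _ fun a ha => ?_
    rw [smul_smul]
    exact hx _ (by rw [pow_succ']; exact Ideal.mul_mem_mul ha hb)

lemma le_ringKrullDim_of_extDepthGE [IsNoetherianRing S] {t : ℕ}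
    (h : ExtDepthGE S t (ModuleCat.of S S)) :
    (t : WithBot ℕ∞) ≤ ringKrullDim S ∧ ∃ rs : List S, rs.length = t ∧
      (∀ r ∈ rs, r ∈ IsLocalRing.maximalIdeal S) ∧ RingTheory.Sequence.IsRegular S rs := by
  have hlt : IsLocalRing.maximalIdeal S • (⊤ : Submodule S S) < ⊤ := by
    simpa using (Ideal.IsPrime.ne_top inferInstance : IsLocalRing.maximalIdeal S ≠ ⊤).lt_top
  obtain ⟨rs, len, mem, reg⟩ := ModuleCat.exists_isRegular_of_exists_subsingleton_ext
    (IsLocalRing.maximalIdeal S) t (ModuleCat.of S S) hlt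
    (ModuleCat.of S (IsLocalRing.ResidueField S))
    (by
      rw [Module.support_eq_zeroLocus]
      exact congrArg _ (congrArg _ (Ideal.annihilator_quotient (I := IsLocalRing.maximalIdeal S))))
    h
  refine ⟨?_, rs, len, mem, reg⟩
  rw [← ringKrullDim_add_length_eq_ringKrullDim_of_isRegular rs reg, len]
  have : (0 : WithBot ℕ∞) ≤ ringKrullDim (S ⧸ Ideal.ofList rs) := by
    have : Nontrivial (S ⧸ Ideal.ofList rs) := by
      refine Ideal.Quotient.nontrivial_iff.mpr fun h => ?_
      exact reg.2 (by rw [h]; simp)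
    exact ringKrullDim_nonneg_of_nontrivial
  exact le_add_of_nonneg_left this

end ExtDepth

section AuslanderBuchsbaum

variable {S : Type u} [CommRing S] [IsLocalRing S]

/-- Finite modules over a local ring admit minimal free covers. -/
lemma exists_minimal_free_cover (M : Type u) [AddCommGroup M] [Module S M] [Module.Finite S M] :
    ∃ (ι : Type u) (_ : Fintype ι) (π : (ι → S) →ₗ[S] M), Function.Surjective π ∧
      ∀ x ∈ LinearMap.ker π, ∀ i, x i ∈ IsLocalRing.maximalIdeal S := by
  let k := IsLocalRing.ResidueField S
  let w := Module.Free.chooseBasis k (k ⊗[S] M)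
  obtain ⟨v, hv⟩ :=
    (TensorProduct.mk_surjective S M k Ideal.Quotient.mk_surjective).comp_left w
  refine ⟨_, inferInstance, Fintype.linearCombination S v, ?_, fun x hx i => ?_⟩
  · rw [← LinearMap.range_eq_top, Fintype.range_linearCombination]
    exact IsLocalRing.span_eq_top_of_tmul_eq_basis v w (congr_fun hv)
  · have hsum : ∑ j, IsLocalRing.residue S (x j) • w j = 0 := by
      have h := congrArg (TensorProduct.mk S k M 1) (LinearMap.mem_ker.mp hx)
      rw [Fintype.linearCombination_apply, map_sum, map_zero] at h
      rw [← h]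
      refine Finset.sum_congr rfl fun j _ => ?_
      rw [map_smul, ← congr_fun hv j]
      exact algebraMap_smul k (x j) _
    have := Fintype.linearIndependent_iff.mp w.linearIndependent _ hsum i
    exact (IsLocalRing.residue_eq_zero_iff _).mp this

/-- A map of finite free modules with entries in the maximal ideal induces zero on `Ext(k, -)`. -/
lemma ext_comp_eq_zero_of_minimal {ι : Type u} [Fintype ι] {K : Type u} [AddCommGroup K]
    [Module S K] [Module.Free S K] [Module.Finite S K] (f : K →ₗ[S] (ι → S))
    (hf : ∀ x i, f x i ∈ IsLocalRing.maximalIdeal S) {t : ℕ}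
    (e : Abelian.Ext (ModuleCat.of S (IsLocalRing.ResidueField S)) (ModuleCat.of S K) t) :
    e.comp (Abelian.Ext.mk₀ (ModuleCat.ofHom f)) (add_zero t) = 0 := by
  classical
  let b := Module.Free.chooseBasis S K
  have hsum : ModuleCat.ofHom f = ∑ j, ∑ i, f (b j) i •
      ModuleCat.ofHom ((LinearMap.single S (fun _ : ι => S) i).comp (b.coord j)) := by
    ext x l
    rw [ModuleCat.hom_sum]
    simp only [ModuleCat.hom_sum, ModuleCat.hom_smul, ModuleCat.hom_ofHom, LinearMap.sum_apply,
      LinearMap.smul_apply, LinearMap.comp_apply, LinearMap.single_apply, Finset.sum_apply,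
      Pi.smul_apply, Module.Basis.coord_apply, smul_eq_mul, Pi.single_apply, mul_ite, mul_zero,
      Finset.sum_ite_eq, Finset.mem_univ, if_true]
    have hx : f x = ∑ j, b.repr x j • f (b j) := by
      conv_lhs => rw [← b.sum_repr x, map_sum]
      simp only [map_smul]
    exact (congrFun hx l).trans (by simp [mul_comm])
  rw [hsum]
  simp only [Abelian.Ext.mk₀_sum, Abelian.Ext.comp_sum, Abelian.Ext.mk₀_smul,
    Abelian.Ext.comp_smul]
  exact Finset.sum_eq_zero fun j _ => Finset.sum_eq_zero fun i _ =>
    smul_ext_residueField_eq_zero (hf _ _) _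

lemma exists_ext_eq_of_pd_eq [IsNoetherianRing S] {t : ℕ}
    (ht : ¬ Subsingleton
      (Abelian.Ext (ModuleCat.of S (IsLocalRing.ResidueField S)) (ModuleCat.of S S) t))
    (hfree : ∀ (ι : Type u) [Fintype ι], ExtDepthGE S t (ModuleCat.of S (ι → S)))
    (n : ℕ) (M : ModuleCat.{u} S) [Module.Finite S M] (hM : HasProjectiveDimensionLT M (n + 2))
    (hM' : ¬ HasProjectiveDimensionLT M (n + 1)) :
    ∃ j, j + (n + 1) = t ∧
      ¬ Subsingleton (Abelian.Ext (ModuleCat.of S (IsLocalRing.ResidueField S)) M j) := by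
  induction n generalizing M with
  | zero =>
    obtain ⟨ι, _, π, hπ, hker⟩ := exists_minimal_free_cover (S := S) M
    have hT := LinearMap.shortExact_shortComplexKer hπ
    have hF : Projective (ModuleCat.of S (ι → S)) :=
      (IsProjective.iff_projective (R := S) (ι → S)).mp inferInstance
    have hK : HasProjectiveDimensionLT (ModuleCat.of S (LinearMap.ker π)) 1 :=
      (hT.hasProjectiveDimensionLT_X₃_iff 0 hF).mp hM
    rw [← projective_iff_hasProjectiveDimensionLT_one] at hK
    have hKp : Module.Projective S (LinearMap.ker π) :=
      (IsProjective.iff_projective (R := S) (LinearMap.ker π)).mpr hK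
    have : Module.Free S (LinearMap.ker π) := Module.free_of_flat_of_isLocalRing
    have hKnt : Nontrivial (LinearMap.ker π) := by
      by_contra hsub
      rw [not_nontrivial_iff_subsingleton] at hsub
      refine hM' (projective_iff_hasProjectiveDimensionLT_one.mp ?_)
      have hinj : Function.Injective π :=
        LinearMap.ker_eq_bot.mp (Submodule.subsingleton_iff_eq_bot.mp hsub)
      exact (IsProjective.iff_projective (R := S) M).mp
        (Module.Projective.of_equiv (LinearEquiv.ofBijective π ⟨hinj, hπ⟩))
    have hKext : ¬ Subsingleton (Abelian.Ext (ModuleCat.of S (IsLocalRing.ResidueField S))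
        (ModuleCat.of S (LinearMap.ker π)) t) := by
      intro hsub
      refine ht (subsingleton_of_forall_eq 0 fun e => ?_)
      let b := Module.Free.chooseBasis S (LinearMap.ker π)
      obtain ⟨j⟩ : Nonempty (Module.Free.ChooseBasisIndex S (LinearMap.ker π)) :=
        b.index_nonempty
      let i₁ : ModuleCat.of S S ⟶ ModuleCat.of S (LinearMap.ker π) :=
        ModuleCat.ofHom (LinearMap.toSpanSingleton S _ (b j))
      let p₁ : ModuleCat.of S (LinearMap.ker π) ⟶ ModuleCat.of S S := ModuleCat.ofHom (b.coord j)
      have hip : i₁ ≫ p₁ = 𝟙 _ := by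
        ext
        simp [i₁, p₁]
      rw [← Abelian.Ext.comp_mk₀_id e, ← hip, ← Abelian.Ext.mk₀_comp_mk₀,
        ← Abelian.Ext.comp_assoc_of_third_deg_zero,
        Subsingleton.elim (e.comp (Abelian.Ext.mk₀ i₁) (add_zero t)) 0, Abelian.Ext.zero_comp]
    obtain ⟨e, he⟩ : ∃ e : Abelian.Ext (ModuleCat.of S (IsLocalRing.ResidueField S))
        (ModuleCat.of S (LinearMap.ker π)) t, e ≠ 0 := by
      by_contra! hall
      exact hKext (subsingleton_of_forall_eq 0 hall)
    have hzero := ext_comp_eq_zero_of_minimal (LinearMap.ker π).subtype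
      (fun x i => hker x x.2 i) e
    cases t with
    | zero =>
      have := hT.mono_f
      exact absurd (Abelian.Ext.postcomp_mk₀_injective_of_mono _ π.shortComplexKer.f
        (hzero.trans (map_zero ((Abelian.Ext.mk₀ π.shortComplexKer.f).postcomp _ _)).symm)) he
    | succ t =>
      refine ⟨t, rfl, fun hsub => he ?_⟩
      obtain ⟨y, rfl⟩ := Abelian.Ext.covariant_sequence_exact₁ _ hT e hzero rfl
      rw [Subsingleton.elim (α := Abelian.Ext _ M t) y 0]
      exact Abelian.Ext.zero_comp _ _ hT.extClass _ _
  | succ n ih =>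
    obtain ⟨ι, _, π, hπ, -⟩ := exists_minimal_free_cover (S := S) M
    have hT := LinearMap.shortExact_shortComplexKer hπ
    have hF : Projective (ModuleCat.of S (ι → S)) :=
      (IsProjective.iff_projective (R := S) (ι → S)).mp inferInstance
    obtain ⟨j, hj, hKext⟩ := ih (ModuleCat.of S (LinearMap.ker π))
      ((hT.hasProjectiveDimensionLT_X₃_iff (n + 1) hF).mp hM)
      (fun h => hM' ((hT.hasProjectiveDimensionLT_X₃_iff n hF).mpr h))
    have hFj := hfree ι j (by omega)
    obtain ⟨e, he⟩ : ∃ e : Abelian.Ext (ModuleCat.of S (IsLocalRing.ResidueField S))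
        (ModuleCat.of S (LinearMap.ker π)) j, e ≠ 0 := by
      by_contra! hall
      exact hKext (subsingleton_of_forall_eq 0 hall)
    have hzero : e.comp (Abelian.Ext.mk₀ π.shortComplexKer.f) (add_zero j) = 0 :=
      hFj.elim _ _
    cases j with
    | zero =>
      have := hT.mono_f
      exact absurd (Abelian.Ext.postcomp_mk₀_injective_of_mono _ π.shortComplexKer.f
        (hzero.trans (map_zero ((Abelian.Ext.mk₀ π.shortComplexKer.f).postcomp _ _)).symm)) he
    | succ j =>
      refine ⟨j, by omega, fun hsub => he ?_⟩
      obtain ⟨y, rfl⟩ := Abelian.Ext.covariant_sequence_exact₁ _ hT e hzero rfl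
      rw [Subsingleton.elim (α := Abelian.Ext _ M j) y 0]
      exact Abelian.Ext.zero_comp _ _ hT.extClass _ _

/-- A finite module of finite projective dimension over a Noetherian local ring has projective
dimension at most the dimension of the ring. -/
lemma hasProjectiveDimensionLT_of_ringKrullDim_eq [IsNoetherianRing S] {d : ℕ}
    (hd : ringKrullDim S = d) (M : ModuleCat.{u} S) [Module.Finite S M] (n : ℕ)
    (hM : HasProjectiveDimensionLT M n) : HasProjectiveDimensionLT M (d + 1) := by
  classical
  have hex : ∃ t, ¬ Subsingleton
      (Abelian.Ext (ModuleCat.of S (IsLocalRing.ResidueField S)) (ModuleCat.of S S) t) := by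
    by_contra! hall
    have h := (le_ringKrullDim_of_extDepthGE (S := S) (t := d + 1) fun i _ => hall i).1
    rw [hd] at h
    have h' : d + 1 ≤ d := by exact_mod_cast h
    omega
  obtain ⟨hle, rs, len, mem, reg⟩ := le_ringKrullDim_of_extDepthGE (S := S) (t := Nat.find hex)
    fun i hi => not_not.mp (Nat.find_min hex hi)
  have htd : Nat.find hex ≤ d := by
    rw [hd] at hle
    exact_mod_cast hle
  have hfree (ι : Type u) [Fintype ι] :
      ExtDepthGE S (Nat.find hex) (ModuleCat.of S (ι → S)) := by
    rw [← len]
    refine extDepthGE_of_isWeaklyRegular rs mem _ ?_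
    exact ((TensorProduct.rid S (ι → S)).isWeaklyRegular_congr rs).mp
      (reg.1.isWeaklyRegular_lTensor (M₂ := ι → S))
  have hexM : ∃ n, HasProjectiveDimensionLT M n := ⟨n, hM⟩
  by_cases hle2 : Nat.find hexM ≤ d + 1
  · exact @hasProjectiveDimensionLT_of_ge _ _ _ M _ _ hle2 (Nat.find_spec hexM)
  · obtain ⟨m, hm⟩ : ∃ m, Nat.find hexM = m + 2 := ⟨Nat.find hexM - 2, by omega⟩
    obtain ⟨j, hj, -⟩ := exists_ext_eq_of_pd_eq (Nat.find_spec hex) hfree m M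
      (hm ▸ Nat.find_spec hexM) (Nat.find_min hexM (by omega))
    omega

end AuslanderBuchsbaum

/-- Multiplication by every `a ∈ I` on `M` factors through each projective mapping onto `M`. -/
def StablyAnnihilatedBy {S : Type u} [CommRing S] (I : Ideal S) (M : ModuleCat.{u} S) : Prop :=
  ∀ a ∈ I, ∀ (F : ModuleCat.{u} S) [Module.Projective S F] (π : F →ₗ[S] M),
    Function.Surjective π → ∃ s : M →ₗ[S] F, π ∘ₗ s = a • LinearMap.id

section Acyclicity

variable {S : Type u} [CommRing S]

lemma stablyAnnihilatedBy_annihilator (M : ModuleCat.{u} S) :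
    StablyAnnihilatedBy (Module.annihilator S M) M := by
  refine fun a ha F _ π _ => ⟨0, ?_⟩
  ext x
  simpa using (Module.mem_annihilator.mp ha x).symm

lemma exists_comp_subtype_ker_eq_smul {F M : Type u} [AddCommGroup F] [Module S F]
    [AddCommGroup M] [Module S M] {π : F →ₗ[S] M} {a : S} {s : M →ₗ[S] F}
    (hs : π ∘ₗ s = a • LinearMap.id) :
    ∃ r : F →ₗ[S] LinearMap.ker π,
      r ∘ₗ (LinearMap.ker π).subtype = a • LinearMap.id := by
  refine ⟨LinearMap.codRestrict _ (a • LinearMap.id - s ∘ₗ π) fun x => ?_, ?_⟩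
  · have := LinearMap.congr_fun hs (π x)
    simp only [LinearMap.comp_apply, LinearMap.smul_apply, LinearMap.id_apply] at this
    simp [this]
  · ext x
    simp

lemma StablyAnnihilatedBy.ker {I : Ideal S} {M : ModuleCat.{u} S} (hM : StablyAnnihilatedBy I M)
    {F : ModuleCat.{u} S} [Module.Projective S F] {π : F →ₗ[S] M} (hπ : Function.Surjective π) :
    StablyAnnihilatedBy I (ModuleCat.of S (LinearMap.ker π)) := by
  intro a ha F' _ π' hπ'
  obtain ⟨s, hs⟩ := hM a ha F π hπ
  obtain ⟨r, hr⟩ := exists_comp_subtype_ker_eq_smul hs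
  obtain ⟨h, hh⟩ := Module.projective_lifting_property π' r hπ'
  exact ⟨h ∘ₗ (LinearMap.ker π).subtype, by rw [← LinearMap.comp_assoc, hh, hr]⟩

lemma lTensor_shortExact (W : Type u) [AddCommGroup W] [Module S W] {F M : ModuleCat.{u} S}
    {π : F →ₗ[S] M} (hπ : Function.Surjective π)
    (hinj : Function.Injective ((LinearMap.ker π).subtype.lTensor W)) :
    (ShortComplex.mk (ModuleCat.ofHom ((LinearMap.ker π).subtype.lTensor W))
      (ModuleCat.ofHom (π.lTensor W)) (by
        rw [← ModuleCat.ofHom_comp, ← LinearMap.lTensor_comp,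
          (LinearMap.exact_subtype_ker_map π).linearMap_comp_eq_zero, LinearMap.lTensor_zero]
        rfl)).ShortExact where
  exact := by
    rw [ShortComplex.ShortExact.moduleCat_exact_iff_function_exact]
    exact lTensor_exact W (LinearMap.exact_subtype_ker_map π) hπ
  mono_f := (ModuleCat.mono_iff_injective _).mpr hinj
  epi_g := (ModuleCat.epi_iff_surjective _).mpr (LinearMap.lTensor_surjective W hπ)

lemma shortExact_ker {F M : ModuleCat.{u} S} {π : F →ₗ[S] M} (hπ : Function.Surjective π) :
    π.shortComplexKer.ShortExact :=
  LinearMap.shortExact_shortComplexKer hπ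

lemma smul_tensor_eq_zero {W K : Type u} [AddCommGroup W] [Module S W] [AddCommGroup K]
    [Module S K] {b : S} (hb : b ∈ Module.annihilator S W) (z : W ⊗[S] K) : b • z = 0 := by
  induction z with
  | zero => simp
  | tmul w y => rw [TensorProduct.smul_tmul', Module.mem_annihilator.mp hb w,
      TensorProduct.zero_tmul]
  | add x y hx hy => rw [smul_add, hx, hy, add_zero]

variable [IsLocalRing S]

/-- The acyclicity lemma: if `W` carries a regular sequence of length at least the projective
dimension of `M` and the positive `Tor(W, M)` are killed by a power of the maximal ideal,
then tensoring a projective presentation of `M` with `W` preserves injectivity. -/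
lemma extDepthGE_tensor_and_injective (W : Type u) [AddCommGroup W] [Module S W] {rs : List S}
    (mem : ∀ r ∈ rs, r ∈ IsLocalRing.maximalIdeal S)
    (reg : RingTheory.Sequence.IsWeaklyRegular W rs) {I : Ideal S} {k : ℕ}
    (hk : IsLocalRing.maximalIdeal S ^ k ≤ Module.annihilator S W ⊔ I) (n : ℕ)
    (hn : n ≤ rs.length) (M : ModuleCat.{u} S) (hM : HasProjectiveDimensionLT M (n + 1))
    (hI : StablyAnnihilatedBy I M) :
    ExtDepthGE S (rs.length - n) (ModuleCat.of S (W ⊗[S] M)) ∧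
    ∀ (F : ModuleCat.{u} S) [Module.Projective S F] (π : F →ₗ[S] M), Function.Surjective π →
      Function.Injective ((LinearMap.ker π).subtype.lTensor W) := by
  induction n generalizing M with
  | zero =>
    rw [← projective_iff_hasProjectiveDimensionLT_one, ← IsProjective.iff_projective] at hM
    refine ⟨extDepthGE_of_isWeaklyRegular rs mem _ (reg.isWeaklyRegular_rTensor (M₂ := M)),
      fun F _ π hπ => ?_⟩
    obtain ⟨s, hs⟩ := Module.projective_lifting_property π LinearMap.id hπ
    obtain ⟨r, hr⟩ := exists_comp_subtype_ker_eq_smul (a := 1) (hs.trans (one_smul _ _).symm)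
    refine Function.LeftInverse.injective (g := r.lTensor W) fun x => ?_
    rw [← LinearMap.comp_apply, ← LinearMap.lTensor_comp, hr, one_smul, LinearMap.lTensor_id]
    rfl
  | succ n ih =>
    have hinj : ∀ (F : ModuleCat.{u} S) [Module.Projective S F] (π : F →ₗ[S] M),
        Function.Surjective π →
        ExtDepthGE S (rs.length - n) (ModuleCat.of S (W ⊗[S] LinearMap.ker π)) ∧
        Function.Injective ((LinearMap.ker π).subtype.lTensor W) := by
      intro F _ π hπ
      have hF : Projective F := (IsProjective.iff_projective (R := S) F).mp inferInstance
      have hK := (ih (by omega) (ModuleCat.of S (LinearMap.ker π))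
        (((shortExact_ker hπ).hasProjectiveDimensionLT_X₃_iff n hF).mp hM) (hI.ker hπ)).1
      refine ⟨hK, ?_⟩
      rw [injective_iff_map_eq_zero]
      intro x hx
      have hK1 : ExtDepthGE S 1 (ModuleCat.of S (W ⊗[S] LinearMap.ker π)) :=
        hK.mono (by omega)
      refine hK1.eq_zero_of_maximalIdeal_pow_smul k x fun a ha => ?_
      obtain ⟨b, hb, c, hc, rfl⟩ := Submodule.mem_sup.mp (hk ha)
      have hcx : c • x = 0 := by
        obtain ⟨s, hs⟩ := hI c hc F π hπ
        obtain ⟨r, hr⟩ := exists_comp_subtype_ker_eq_smul hs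
        calc c • x = (r ∘ₗ (LinearMap.ker π).subtype).lTensor W x := by
              rw [hr, LinearMap.lTensor_smul, LinearMap.lTensor_id]
              rfl
          _ = 0 := by rw [LinearMap.lTensor_comp, LinearMap.comp_apply, hx, map_zero]
      exact (add_smul b c x).trans (by rw [smul_tensor_eq_zero hb, hcx, add_zero])
    refine ⟨?_, fun F _ π hπ => (hinj F π hπ).2⟩
    have hπ := Finsupp.linearCombination_id_surjective S M
    obtain ⟨hK, hi⟩ := hinj (ModuleCat.of S (M →₀ S)) (Finsupp.linearCombination S id) hπ
    refine ExtDepthGE.of_shortExact (lTensor_shortExact W hπ hi) (hK.mono (by omega))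
      (ExtDepthGE.mono (Nat.sub_le _ _) ?_)
    exact extDepthGE_of_isWeaklyRegular rs mem _ (reg.isWeaklyRegular_rTensor (M₂ := M →₀ S))

end Acyclicity

section Resolution

variable {S : Type u} [CommRing S] {M : ModuleCat.{u} S} (P : ProjectiveResolution M)

lemma exact_succ_codRestrict {i : ℕ} {Z : ModuleCat.{u} S} {π : P.complex.X i →ₗ[S] Z}
    (hπ : Function.Exact (P.complex.d (i + 1) i).hom π) :
    ∃ π' : P.complex.X (i + 1) →ₗ[S] LinearMap.ker π, Function.Surjective π' ∧
      (LinearMap.ker π).subtype ∘ₗ π' = (P.complex.d (i + 1) i).hom ∧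
      Function.Exact (P.complex.d (i + 2) (i + 1)).hom π' := by
  refine ⟨LinearMap.codRestrict _ (P.complex.d (i + 1) i).hom fun x => (hπ _).mpr ⟨x, rfl⟩,
    ?_, rfl, ?_⟩
  · rintro ⟨y, hy⟩
    obtain ⟨x, rfl⟩ := (hπ y).mp hy
    exact ⟨x, rfl⟩
  · have h := (ShortComplex.ShortExact.moduleCat_exact_iff_function_exact _).mp (P.exact_succ i)
    intro x
    rw [← h x]
    exact Subtype.ext_iff

/-- A property of modules inherited by syzygies holds for all syzygies in a resolution. -/
lemma exists_syzygy (Q : ℕ → ModuleCat.{u} S → Prop) (h0 : Q 0 M)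
    (hstep : ∀ i Z, Q i Z → ∀ (F : ModuleCat.{u} S) [Module.Projective S F] (π : F →ₗ[S] Z),
      Function.Surjective π → Q (i + 1) (ModuleCat.of S (LinearMap.ker π))) (i : ℕ) :
    ∃ Z, Q i Z ∧ ∃ π : P.complex.X i →ₗ[S] Z, Function.Surjective π ∧
      Function.Exact (P.complex.d (i + 1) i).hom π := by
  induction i with
  | zero =>
    refine ⟨M, h0, (P.π.f 0).hom, (ModuleCat.epi_iff_surjective _).mp inferInstance, ?_⟩
    exact (ShortComplex.ShortExact.moduleCat_exact_iff_function_exact _).mp P.exact₀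
  | succ i ih =>
    obtain ⟨Z, hZ, π, hπ, hex⟩ := ih
    obtain ⟨π', hπ', -, hex'⟩ := exact_succ_codRestrict P hex
    have : Module.Projective S (P.complex.X i) :=
      (IsProjective.iff_projective (R := S) _).mpr (P.projective i)
    exact ⟨_, hstep i Z hZ _ π hπ, π', hπ', hex'⟩

lemma isZero_tor_of_injective (W : ModuleCat.{u} S) (Q : ModuleCat.{u} S → Prop)
    (hQ : ∀ Z, Q Z → ∀ (F : ModuleCat.{u} S) [Module.Projective S F] (π : F →ₗ[S] Z),
      Function.Surjective π → Q (ModuleCat.of S (LinearMap.ker π)) ∧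
        Function.Injective ((LinearMap.ker π).subtype.lTensor W))
    (hM : Q M) (i : ℕ) (hi : 0 < i) :
    IsZero (((Tor (ModuleCat.{u} S) i).obj W).obj M) := by
  obtain ⟨i, rfl⟩ : ∃ j, i = j + 1 := ⟨i - 1, by omega⟩
  let P : ProjectiveResolution M := projectiveResolution M
  refine IsZero.of_iso ?_ (P.isoLeftDerivedObj ((MonoidalCategory.tensorLeft W)) (i + 1))
  refine (HomologicalComplex.exactAt_iff_isZero_homology _ _).mp ?_
  rw [HomologicalComplex.exactAt_iff' _ (i + 2) (i + 1) i (by simp) (by simp)]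
  rw [ShortComplex.ShortExact.moduleCat_exact_iff_function_exact]
  obtain ⟨Z, hZ, π, hπ, hex⟩ := exists_syzygy P (fun _ => Q) hM
    (fun _ Z hZ F _ π hπ => (hQ Z hZ F π hπ).1) i
  obtain ⟨π', hπ', hd, hex'⟩ := exact_succ_codRestrict P hex
  have : Module.Projective S (P.complex.X i) :=
    (IsProjective.iff_projective (R := S) _).mpr (P.projective i)
  have hinj := (hQ Z hZ _ π hπ).2
  have h1 : Function.Exact ((P.complex.d (i + 2) (i + 1)).hom.lTensor W) (π'.lTensor W) :=
    lTensor_exact W hex' hπ'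
  have h2 : Function.Exact ((P.complex.d (i + 2) (i + 1)).hom.lTensor W)
      ((P.complex.d (i + 1) i).hom.lTensor W) := by
    rw [← hd, LinearMap.lTensor_comp]
    exact h1.comp_injective _ hinj (map_zero _)
  exact h2

lemma HasFinitePD.exists_hasProjectiveDimensionLT {N : Type u} [AddCommGroup N] [Module S N]
    (h : HasFinitePD S N) : ∃ n, HasProjectiveDimensionLT (ModuleCat.of S N) n := by
  obtain ⟨n, hn⟩ := h
  let P : ProjectiveResolution (ModuleCat.of S N) := projectiveResolution _
  obtain ⟨Z, hZ, π, hπ, hex⟩ := exists_syzygy P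
    (fun i Z => ∀ m, HasProjectiveDimensionLT Z (m + 1) →
      HasProjectiveDimensionLT (ModuleCat.of S N) (m + i + 1)) (fun m h => h)
    (fun i Z hZ F hF π hπ m hK => by
      have := hZ (m + 1) (((shortExact_ker hπ).hasProjectiveDimensionLT_X₃_iff m
        ((IsProjective.iff_projective (R := S) F).mp hF)).mpr hK)
      rwa [show m + (i + 1) = m + 1 + i by ring]) n
  obtain ⟨π', hπ', hd, hex'⟩ := exact_succ_codRestrict P hex
  have hzero := IsZero.of_iso (hn (n + 1) n.lt_succ_self (ModuleCat.of S (LinearMap.ker π)))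
    (P.isoExt (R := S) (n + 1) _).symm
  rw [← HomologicalComplex.exactAt_iff_isZero_homology,
    HomologicalComplex.exactAt_iff' _ n (n + 1) (n + 2) (by simp) (by simp),
    ShortComplex.moduleCat_exact_iff] at hzero
  obtain ⟨g, hg⟩ := hzero (ModuleCat.ofHom π') (by
    change P.complex.d (n + 2) (n + 1) ≫ ModuleCat.ofHom π' = 0
    refine ModuleCat.hom_ext (LinearMap.ext fun x => ?_)
    exact hex'.apply_apply_eq_zero x)
  change (P.complex.X n ⟶ ModuleCat.of S (LinearMap.ker π)) at g
  change P.complex.d (n + 1) n ≫ g = ModuleCat.ofHom π' at hg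
  have hret : ModuleCat.ofHom (LinearMap.ker π).subtype ≫ g = 𝟙 _ := by
    refine ModuleCat.hom_ext (LinearMap.ext fun x => ?_)
    obtain ⟨y, rfl⟩ := hπ' x
    have h1 := LinearMap.congr_fun hd y
    have h2 := LinearMap.congr_fun (congrArg ModuleCat.Hom.hom hg) y
    change g.hom ((LinearMap.ker π).subtype (π' y)) = π' y
    rw [LinearMap.comp_apply] at h1
    rw [h1]
    exact h2
  have hproj : Projective (ModuleCat.of S (LinearMap.ker π)) :=
    (Retract.mk _ g hret).projective
  refine ⟨_, hZ 1 (((shortExact_ker (F := P.complex.X n) hπ).hasProjectiveDimensionLT_X₃_iff 0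
    (P.projective n)).mpr (projective_iff_hasProjectiveDimensionLT_one.mp hproj))⟩

end Resolution


/-- Let `W` carry a regular sequence of length `dim S`. If `M` is finitely generated of finite
projective dimension and `ann W + ann M` is primary to the maximal ideal, then `W` and `M` are
Tor-independent. -/
lemma isZero_tor_of_isWeaklyRegular {S : Type u} [CommRing S] [IsLocalRing S]
    [IsNoetherianRing S] {d : ℕ} (hd : ringKrullDim S = d) (W : ModuleCat.{u} S) {rs : List S}
    (hlen : rs.length = d) (mem : ∀ r ∈ rs, r ∈ IsLocalRing.maximalIdeal S)
    (reg : RingTheory.Sequence.IsWeaklyRegular W rs) (M : ModuleCat.{u} S) [Module.Finite S M]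
    {n : ℕ} (hM : HasProjectiveDimensionLT M n) {k : ℕ}
    (hk : IsLocalRing.maximalIdeal S ^ k ≤ Module.annihilator S W ⊔ Module.annihilator S M)
    (i : ℕ) (hi : 0 < i) : IsZero (((Tor (ModuleCat.{u} S) i).obj W).obj M) := by
  refine isZero_tor_of_injective W (fun Z => HasProjectiveDimensionLT Z (d + 1) ∧
    StablyAnnihilatedBy (Module.annihilator S M) Z) ?_
    ⟨hasProjectiveDimensionLT_of_ringKrullDim_eq hd M n hM, stablyAnnihilatedBy_annihilator M⟩
    i hi
  rintro Z ⟨hZ, hZM⟩ F _ π hπ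
  have hF : Projective F := (IsProjective.iff_projective (R := S) F).mp inferInstance
  refine ⟨⟨?_, hZM.ker hπ⟩,
    (extDepthGE_tensor_and_injective W mem reg hk d hlen.ge Z hZ hZM).2 F π hπ⟩
  exact ((shortExact_ker hπ).hasProjectiveDimensionLT_X₃_iff d hF).mp
    (hasProjectiveDimensionLT_of_ge Z (d + 1) (d + 2) (by omega))

section Local

variable {S : Type u} [CommRing S] [IsLocalRing S]

lemma exists_isRegular_of_moduleDepth_eq {T : Type u} [CommRing T] [IsLocalRing T] [Algebra S T]
    (hST : Function.Surjective (algebraMap S T)) (W : Type u) [AddCommGroup W] [Module S W]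
    [Module T W] [IsScalarTower S T W] [Nontrivial W] {d : ℕ} (hd : moduleDepth T W = d) :
    ∃ rs : List S, rs.length = d ∧ (∀ r ∈ rs, r ∈ IsLocalRing.maximalIdeal S) ∧
      RingTheory.Sequence.IsRegular W rs := by
  have : IsLocalHom (algebraMap S T) := IsLocalHom.of_surjective _ hST
  have hmem : moduleDepth T W ∈ {n : ℕ∞ | ∃ rs : List T, n = (rs.length : ℕ∞) ∧
      (∀ x ∈ rs, x ∈ IsLocalRing.maximalIdeal T) ∧ RingTheory.Sequence.IsRegular W rs} :=
    @ENat.sSup_mem_of_nonempty_of_lt_top _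
      ⟨⟨0, [], by simp, by simp, RingTheory.Sequence.IsRegular.nil T W⟩⟩
      (hd.trans_lt (ENat.natCast_lt_top d))
  obtain ⟨rs, hlen, hrs, hreg⟩ := hmem
  obtain ⟨rs, rfl⟩ := List.map_surjective_iff.mpr hST rs
  refine ⟨rs, ?_, fun r hr => ?_, ?_⟩
  · simpa using (hlen.symm.trans hd)
  · have := hrs _ (List.mem_map_of_mem hr)
    rwa [IsLocalRing.mem_maximalIdeal, map_mem_nonunits_iff] at this
  · exact ((AddEquiv.refl W).isRegular_congr (List.forall₂_map_right_iff.mpr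
      (List.forall₂_same.mpr fun r _ x => (algebraMap_smul T r x).symm))).mpr hreg

lemma moduleDim_eq_of_isRegular [IsNoetherianRing S] {d : ℕ} (hd : ringKrullDim S = d)
    (W : Type u) [AddCommGroup W] [Module S W] [Module.Finite S W] {rs : List S}
    (hlen : rs.length = d) (reg : RingTheory.Sequence.IsRegular W rs) : moduleDim S W = d := by
  refine le_antisymm ((ringKrullDim_quotient_le _).trans hd.le) ?_
  rw [moduleDim, ringDim, ← Module.supportDim_eq_ringKrullDim_quotient_annihilator,
    ← Module.supportDim_add_length_eq_supportDim_of_isRegular rs reg, hlen]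
  have : Nontrivial (W ⧸ Ideal.ofList rs • (⊤ : Submodule S W)) :=
    Submodule.Quotient.nontrivial_iff.mpr reg.top_ne_smul.symm
  exact le_add_of_nonneg_left (Order.krullDim_nonneg_iff.mpr
    (Module.nonempty_support_of_nontrivial.to_subtype))

lemma moduleDim_tensorProduct_nonpos {A B : Type u} [AddCommGroup A] [Module S A]
    [AddCommGroup B] [Module S B] {k : ℕ}
    (hk : IsLocalRing.maximalIdeal S ^ k ≤ Module.annihilator S A ⊔ Module.annihilator S B) :
    moduleDim S (A ⊗[S] B) ≤ 0 := by
  rw [moduleDim, ringDim, ← Nat.cast_zero, ← Ring.krullDimLE_iff,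
    Ideal.krullDimLE_zero_quotient_iff_forall_minimalPrimes_isMaximal]
  intro J hJ
  have hJp := hJ.1.1
  have hsup : Module.annihilator S A ⊔ Module.annihilator S B ≤
      Module.annihilator S (A ⊗[S] B) := by
    refine sup_le (fun b hb => Module.mem_annihilator.mpr (smul_tensor_eq_zero hb)) fun b hb =>
      Module.mem_annihilator.mpr fun z => (TensorProduct.comm S A B).injective ?_
    rw [map_smul, map_zero, smul_tensor_eq_zero hb]
  have hle := hJp.le_of_pow_le (hk.trans (hsup.trans hJ.1.2))
  rw [← (IsLocalRing.maximalIdeal.isMaximal S).eq_of_le hJp.ne_top hle]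
  exact IsLocalRing.maximalIdeal.isMaximal S

lemma exists_maximalIdeal_pow_le [IsNoetherianRing S] {I : Ideal S}
    (hI : ∀ Q : Ideal S, Q.IsPrime → I ≤ Q → Q = IsLocalRing.maximalIdeal S) :
    ∃ k, IsLocalRing.maximalIdeal S ^ k ≤ I := by
  obtain ⟨k, hk⟩ := I.exists_radical_pow_le_of_fg (IsNoetherian.noetherian _)
  refine ⟨k, le_trans (Ideal.pow_right_mono ?_ k) hk⟩
  rw [Ideal.radical_eq_sInf]
  exact le_sInf fun Q hQ => (hI Q hQ.2 hQ.1).ge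

end Local

section Localization

variable {R : Type u} [CommRing R] (q : Ideal R) [q.IsPrime]

lemma under_le_of_isPrime {Q : Ideal (Localization.AtPrime q)} (hQ : Q.IsPrime) :
    Q.under R ≤ q :=
  (Ideal.comap_mono (IsLocalRing.le_maximalIdeal hQ.ne_top)).trans_eq
    Localization.AtPrime.under_maximalIdeal

lemma annihilator_localizedModule_le (N : Type u) [AddCommGroup N] [Module R N]
    [Module.Finite R N] {Q : Ideal (Localization.AtPrime q)} (hQ : Q.IsPrime)
    (h : Module.annihilator R N ≤ Q.under R) :
    Module.annihilator (Localization.AtPrime q) (LocalizedModule q.primeCompl N) ≤ Q := by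
  intro s hs
  obtain ⟨⟨a, t⟩, hat⟩ := IsLocalization.surj q.primeCompl s
  suffices a ∈ Q.under R by
    have hmem : s * algebraMap R _ (t : R) ∈ Q := hat.symm ▸ this
    refine (hQ.mem_or_mem hmem).resolve_right fun ht => hQ.ne_top ?_
    exact Ideal.eq_top_of_isUnit_mem _ ht (IsLocalization.map_units _ t)
  by_contra ha
  have hsupp : (⟨Q.under R, inferInstance⟩ : PrimeSpectrum R) ∈ Module.support R N :=
    Module.mem_support_iff_of_finite.mpr h
  refine Module.notMem_support_iff'.mpr (fun m => ?_) hsupp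
  have hm : (LocalizedModule.mkLinearMap q.primeCompl N) (a • m) = 0 := by
    rw [map_smul, ← algebraMap_smul (Localization.AtPrime q), ← hat, mul_comm, mul_smul,
      Module.mem_annihilator.mp hs, smul_zero]
  obtain ⟨c, hc⟩ := (IsLocalizedModule.eq_zero_iff q.primeCompl _).mp hm
  refine ⟨c * a, fun hca => ?_, by rw [mul_smul]; exact hc⟩
  exact ((Ideal.IsPrime.comap (algebraMap R _) (hK := hQ)).mem_or_mem hca).elim
    (fun h => c.2 (under_le_of_isPrime q hQ h)) ha

lemma exists_hasProjectiveDimensionLT_localizedModule (N : Type u) [AddCommGroup N] [Module R N]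
    (h : HasFinitePD R N) : ∃ n, HasProjectiveDimensionLT
      (ModuleCat.of (Localization.AtPrime q) (LocalizedModule q.primeCompl N)) n := by
  obtain ⟨n, hn⟩ := h.exists_hasProjectiveDimensionLT
  have hn' : HasProjectiveDimensionLE (ModuleCat.of R N) n :=
    hasProjectiveDimensionLT_of_ge _ n (n + 1) (by omega)
  have := ModuleCat.localizedModule_hasProjectiveDimensionLE n q.primeCompl (ModuleCat.of R N)
  exact ⟨n + 1, @hasProjectiveDimensionLT_of_iso _ _ _ _ _
    (LinearEquiv.toModuleIso (Shrink.linearEquiv _ _)) _ this⟩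

end Localization

theorem stmt_13 (R : Type u) [CommRing R] [IsLocalRing R] [IsNoetherianRing R]
    (hequiloc : ∀ (q : Ideal R) [q.IsPrime],
      ∀ p ∈ minimalPrimes (Localization.AtPrime q),
        ringDim (Localization.AtPrime q ⧸ p) = ringDim (Localization.AtPrime q))
    (hDEloc : ∀ (q : Ideal R) [q.IsPrime],
      ∀ (A B : Type u) [AddCommGroup A] [Module (Localization.AtPrime q) A]
        [AddCommGroup B] [Module (Localization.AtPrime q) B]
        [Module.Finite (Localization.AtPrime q) A] [Module.Finite (Localization.AtPrime q) B]
        [Nontrivial A] [Nontrivial B],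
        (∀ i : ℕ, 0 < i →
          IsZero (((Tor (ModuleCat.{u} (Localization.AtPrime q)) i).obj
            (ModuleCat.of (Localization.AtPrime q) A)).obj
            (ModuleCat.of (Localization.AtPrime q) B))) →
        moduleDim (Localization.AtPrime q) A + moduleDim (Localization.AtPrime q) B =
          ringDim (Localization.AtPrime q) +
            moduleDim (Localization.AtPrime q) (A ⊗[Localization.AtPrime q] B))
    (N : Type u) [AddCommGroup N] [Module R N] [Module.Finite R N] [Nontrivial N]
    (hpd : HasFinitePD R N)
    (hMCM : ∀ p ∈ minimalPrimes R, ∀ q ∈ (p + Module.annihilator R N).minimalPrimes,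
      ∀ [inst : (Ideal.map (Ideal.Quotient.mk p) q).IsPrime],
      ∃ W : ModuleCat.{u} (Localization.AtPrime (Ideal.map (Ideal.Quotient.mk p) q)),
        Nontrivial W ∧
        Module.Finite (Localization.AtPrime (Ideal.map (Ideal.Quotient.mk p) q)) W ∧
        (moduleDepth (Localization.AtPrime (Ideal.map (Ideal.Quotient.mk p) q)) W :
            WithBot ℕ∞) =
          ringDim (Localization.AtPrime (Ideal.map (Ideal.Quotient.mk p) q))) :
    ∀ p ∈ minimalPrimes R, ∃ q ∈ (Module.annihilator R N).minimalPrimes, p ≤ q := by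
  intro p hp
  have hpp : p.IsPrime := hp.1.1
  have hne : p + Module.annihilator R N ≠ ⊤ := by
    refine fun h => IsLocalRing.maximalIdeal.isMaximal R |>.ne_top (top_le_iff.mp (h.ge.trans ?_))
    refine sup_le (IsLocalRing.le_maximalIdeal hpp.ne_top) (IsLocalRing.le_maximalIdeal ?_)
    rwa [Ne, Module.annihilator_eq_top_iff, not_subsingleton_iff_nontrivial]
  obtain ⟨m, hm, hle⟩ := Ideal.exists_le_maximal _ hne
  obtain ⟨q, hq, -⟩ := Ideal.exists_minimalPrimes_le hle
  have hqp : q.IsPrime := hq.1.1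
  have hpq : p ≤ q := le_sup_left.trans hq.1.2
  have hNq : Module.annihilator R N ≤ q := le_sup_right.trans hq.1.2
  have hker : RingHom.ker (Ideal.Quotient.mk p) ≤ q := by rwa [Ideal.mk_ker]
  have hcomap : q = (q.map (Ideal.Quotient.mk p)).comap (Ideal.Quotient.mk p) := by
    rw [Ideal.comap_map_mk hpq]
  have hmap : (q.map (Ideal.Quotient.mk p)).IsPrime :=
    Ideal.map_isPrime_of_surjective Ideal.Quotient.mk_surjective hker
  obtain ⟨W, hWn, hWf, hWd⟩ := hMCM p hp q hq
  let φ := Localization.localRingHom q (q.map (Ideal.Quotient.mk p)) (Ideal.Quotient.mk p) hcomap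
  have hφ : Function.Surjective φ :=
    (RingHom.surjectiveOnStalks_of_surjective Ideal.Quotient.mk_surjective).localRingHom_surjective
      _ _ hcomap
  let := φ.toAlgebra
  let := Module.compHom W φ
  have : IsScalarTower (Localization.AtPrime q)
    (Localization.AtPrime (q.map (Ideal.Quotient.mk p))) W := ⟨fun a b w => mul_smul (φ a) b w⟩
  have : Module.Finite (Localization.AtPrime q) W :=
    have := Module.Finite.of_surjective (Algebra.linearMap (Localization.AtPrime q)
      (Localization.AtPrime (q.map (Ideal.Quotient.mk p)))) hφ
    Module.Finite.trans (Localization.AtPrime (q.map (Ideal.Quotient.mk p))) W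
  have hPr : (RingHom.ker φ).under R = p := by
    ext x
    rw [Ideal.under_def, Ideal.mem_comap, RingHom.mem_ker, Localization.localRingHom_to_map,
      IsLocalization.to_map_eq_zero_iff _ (q.map (Ideal.Quotient.mk p)).primeCompl_le_nonZeroDivisors,
      Ideal.Quotient.eq_zero_iff_mem]
  have hP : RingHom.ker φ ∈ minimalPrimes (Localization.AtPrime q) := by
    have := IsLocalization.minimalPrimes_map q.primeCompl (Localization.AtPrime q) (⊥ : Ideal R)
    rw [Ideal.map_bot] at this
    change RingHom.ker φ ∈ (⊥ : Ideal (Localization.AtPrime q)).minimalPrimes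
    rw [this, Set.mem_preimage, hPr]
    exact hp
  obtain ⟨d, hd⟩ : ∃ d : ℕ, ringKrullDim (Localization.AtPrime q) = d := by
    obtain ⟨e, he⟩ := WithBot.ne_bot_iff_exists.mp
      (ringKrullDim_ne_bot (R := Localization.AtPrime q))
    obtain ⟨d, rfl⟩ := ENat.ne_top_iff_exists.mp fun h : e = ⊤ =>
      ringKrullDim_ne_top (he.symm.trans (by rw [h]; rfl))
    exact ⟨d, he.symm⟩
  have hT : ringDim (Localization.AtPrime (q.map (Ideal.Quotient.mk p))) = d := by
    rw [← hd, ringDim, ← ringKrullDim_eq_of_ringEquiv (RingHom.quotientKerEquivOfSurjective hφ)]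
    exact hequiloc q _ hP
  obtain ⟨rs, hlen, mem, reg⟩ := exists_isRegular_of_moduleDepth_eq (S := Localization.AtPrime q)
    hφ W (WithBot.coe_injective (hWd.trans hT))
  obtain ⟨n, hn⟩ := exists_hasProjectiveDimensionLT_localizedModule q N hpd
  have hWp : p.map (algebraMap R (Localization.AtPrime q)) ≤
      Module.annihilator (Localization.AtPrime q) W := by
    rw [Ideal.map_le_iff_le_comap]
    refine hPr.ge.trans <| Ideal.comap_mono fun x hx => Module.mem_annihilator.mpr fun w => ?_
    change φ x • w = 0
    rw [RingHom.mem_ker.mp hx, zero_smul]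
  have hNa : (Module.annihilator R N).map (algebraMap R (Localization.AtPrime q)) ≤
      Module.annihilator (Localization.AtPrime q) (LocalizedModule q.primeCompl N) := by
    rw [Ideal.map_le_iff_le_comap]
    intro x hx
    refine Module.mem_annihilator.mpr fun w => ?_
    induction w using LocalizedModule.induction_on with
    | _ n t => rw [algebraMap_smul, LocalizedModule.smul'_mk, Module.mem_annihilator.mp hx,
        LocalizedModule.zero_mk]
  obtain ⟨k, hk⟩ := exists_maximalIdeal_pow_le (S := Localization.AtPrime q)
      (I := Module.annihilator _ W ⊔ Module.annihilator _ (LocalizedModule q.primeCompl N)) <| by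
    intro Q hQ hle
    have hQq : Q.under R = q := le_antisymm (under_le_of_isPrime q hQ)
      (hq.2 ⟨hQ.comap _, sup_le (Ideal.map_le_iff_le_comap.mp (hWp.trans (le_sup_left.trans hle)))
        (Ideal.map_le_iff_le_comap.mp (hNa.trans (le_sup_right.trans hle)))⟩
        (under_le_of_isPrime q hQ))
    rw [← IsLocalization.map_under q.primeCompl (Localization.AtPrime q) Q, hQq,
      Localization.AtPrime.map_eq_maximalIdeal]
  have hNn : Nontrivial (LocalizedModule q.primeCompl N) :=
    Module.mem_support_iff.mp (Module.mem_support_iff_of_finite (p := ⟨q, hqp⟩).mpr hNq)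
  have hDE := hDEloc q W (LocalizedModule q.primeCompl N)
    (isZero_tor_of_isWeaklyRegular hd (ModuleCat.of _ W) hlen mem reg.toIsWeaklyRegular
      (ModuleCat.of _ (LocalizedModule q.primeCompl N)) hn hk)
  have hdim : moduleDim (Localization.AtPrime q) (LocalizedModule q.primeCompl N) ≤ 0 := by
    rw [moduleDim_eq_of_isRegular hd W hlen reg, ringDim, hd] at hDE
    have h : (d : WithBot ℕ∞) + _ ≤ d + 0 := hDE.trans_le <|
      add_le_add_right (moduleDim_tensorProduct_nonpos hk) _
    generalize moduleDim (Localization.AtPrime q) (LocalizedModule q.primeCompl N) = x at h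
    cases x with
    | bot => exact bot_le
    | coe x =>
      have h' : (d : ℕ∞) + x ≤ d + 0 := by exact_mod_cast h
      exact_mod_cast (ENat.add_le_add_iff_left (ENat.natCast_ne_top d)).mp h'
  rw [moduleDim, ringDim, ← Nat.cast_zero, ← Ring.krullDimLE_iff,
    Ideal.krullDimLE_zero_quotient_iff_forall_minimalPrimes_isMaximal] at hdim
  refine ⟨q, ⟨⟨hqp, hNq⟩, fun q' hq' hle => ?_⟩, hpq⟩
  have hdisj : Disjoint (q.primeCompl : Set R) q' :=
    Set.disjoint_left.mpr fun x hx hx' => hx (hle hx')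
  have hQ := IsLocalization.isPrime_of_isPrime_disjoint q.primeCompl (Localization.AtPrime q) q'
    hq'.1 hdisj
  have hQu := IsLocalization.under_map_of_isPrime_disjoint q.primeCompl (Localization.AtPrime q)
    hq'.1 hdisj
  obtain ⟨J, hJ, hJQ⟩ := Ideal.exists_minimalPrimes_le
    (annihilator_localizedModule_le q N hQ (hQu.symm ▸ hq'.2))
  have hJm := IsLocalRing.eq_maximalIdeal (hdim J hJ)
  rw [hJm] at hJQ
  exact Localization.AtPrime.under_maximalIdeal.ge.trans ((Ideal.comap_mono hJQ).trans hQu.le)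
end
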